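/- arXiv:2510.18451 — 2 statements merged into one kernel-verified Lean document; each statement's English description precedes it below -/
import Mathlib

section
/- Let τ₁ be a natural number with τ₁ ≥ 3 and let Ψ : (0,∞) → (0,∞) be given by Ψ(q) = q^{−τ₁}. If ω : (0,∞) → (0,∞) is given by ω(q) = C·q^{−τ₁(τ₁−1)} for some constant C > (45/16)·8^{τ₁}, then dim_H(E(Ψ,ω)) = 2/τ₁². -/
/-!
Write `τ = τ₁`. A point of `E(Ψ, ω)` lies, for infinitely many fractions `p / q`, within `D q^(-τ²)`
of one of the two points `p / q ± q^(-τ)`, for some constant `D`. The sets of all such points for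
given `D` have dimension at most `2 / τ²`, by the usual covering: each `q` contributes `O(q)` balls
of radius `D q^(-τ²)` per unit interval, and `∑ q · q^(-τ² d)` converges for `d > 2 / τ²`.

For the lower bound, attach to a rational `v` of denominator `q` the window of the points
`v + q^(-τ) - θ q^(-τ²)`, `1 ≤ θ ≤ C`, where `1 < C ≤ 2` without loss of generality. As
`v + q^(-τ)` is itself a reduced fraction, of denominator `q^τ`, any fraction of denominator between
`q` and `q^(τ(τ-1)) / 4` is repelled by `v` or by `v + q^(-τ)`, and so satisfies the lower bound in
the definition of `E(Ψ, ω)` against all points of the window. Hence `E(Ψ, ω)` contains every point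
that lies in the windows of a sequence of rationals, each of which keeps away from the fractions
whose denominator is between `q^(τ(τ-1)) / 4` and its own one, `q` being the denominator of its
predecessor.

Such sequences are abundant. The points near fractions of the intermediate denominators fill only a
small part of the window of `v`, of length `L ≍ q^(-τ²)`, because `q^(τ²) = o(q^(τ(τ-1)(τ-1)))` for
`τ ≥ 3`. So do, for large `N`, the points within `1 / (s N)` of a fraction of some denominator
`s ≤ N / 16`. By Dirichlet's theorem the remaining points are `16 / N²`-close to rationals of
denominator in `(N / 16, N]`, hence there are at least `L N² / 128` admissible rationals in the
window, and they are `1 / N²`-separated. Iteration gives a Cantor set inside `E(Ψ, ω)`. For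
`r < 2 / τ²` and `N` large enough at each step, the map from this set onto `[0, 1)` given by mixed
radix digits is `r`-Hölder, so that the set has dimension at least `r`.
-/

open Filter Set

/-- A real number `x` is `Ψ`-approximable: `|x - p/q| ≤ Ψ q` for infinitely many
pairs `(p, q) ∈ ℤ × ℕ` (with `q > 0`).  `WSet Ψ` is the set `W(Ψ)` of such `x`. -/
def WSet (Ψ : ℝ → ℝ) : Set ℝ :=
  {x : ℝ | {pq : ℤ × ℕ | 0 < pq.2 ∧ |x - (pq.1 : ℝ) / (pq.2 : ℝ)| ≤ Ψ (pq.2 : ℝ)}.Infinite}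

/-- `ESet Ψ ω` is the set `E(Ψ, ω)` of `x ∈ W(Ψ)` such that for all sufficiently large
`q ∈ ℕ` one has `|x - p/q| ≥ (1 - ω q) * Ψ q` for every `p ∈ ℤ`. -/
def ESet (Ψ ω : ℝ → ℝ) : Set ℝ :=
  {x : ℝ | x ∈ WSet Ψ ∧ ∃ Q : ℕ, ∀ q : ℕ, Q ≤ q → ∀ p : ℤ,
    (1 - ω (q : ℝ)) * Ψ (q : ℝ) ≤ |x - (p : ℝ) / (q : ℝ)|}

open MeasureTheory
open scoped ENNReal NNReal

/-! ### Cantor sets of trees of intervals -/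

theorem dimH_le_dimH_image_div_of_edist_le {X Y : Type*} [EMetricSpace X] [EMetricSpace Y]
    {f : X → Y} {s : Set X} {C r : ℝ≥0} (hr : 0 < r)
    (h : ∀ x ∈ s, ∀ y ∈ s, edist x y ≤ C * edist (f x) (f y) ^ (r : ℝ)) :
    dimH s ≤ dimH (f '' s) / r := by
  have hinj : InjOn f s := fun x hx y hy hxy ↦ by
    simpa [hxy, ENNReal.zero_rpow_of_pos (NNReal.coe_pos.2 hr)] using h x hx y hy
  rcases s.eq_empty_or_nonempty with rfl | ⟨x₀, -⟩
  · simp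
  have : Nonempty X := ⟨x₀⟩
  have hinv : LeftInvOn (Function.invFunOn f s) f s := hinj.leftInvOn_invFunOn
  have hholder : HolderOnWith C r (Function.invFunOn f s) (f '' s) := by
    rintro _ ⟨x, hx, rfl⟩ _ ⟨y, hy, rfl⟩
    rw [hinv hx, hinv hy]
    exact h x hx y hy
  simpa only [hinv.image_image] using hholder.dimH_image_le hr

/-- A tree of nested compact intervals: the node `v` carries `Icc (lo v) (hi v)`, and the intervals
of its `arity v` children are arranged in increasing order inside it, at least `gap v` apart. -/
structure IntervalTree (α : Type*) where
  lo : α → ℝ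
  hi : α → ℝ
  gap : α → ℝ
  arity : α → ℕ
  child : (v : α) → Fin (arity v) → α
  lo_le_hi : ∀ v, lo v ≤ hi v
  gap_pos : ∀ v, 0 < gap v
  two_le_arity : ∀ v, 2 ≤ arity v
  child_subset : ∀ v i, Icc (lo (child v i)) (hi (child v i)) ⊆ Icc (lo v) (hi v)
  separated : ∀ v i j, i < j → hi (child v i) + gap v ≤ lo (child v j)

namespace IntervalTree

variable {α : Type*} (T : IntervalTree α)

/-- The Cantor set of a tree of intervals below the node `v₀`: the points lying in all intervals of
an infinite branch that starts at `v₀`. -/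
def limitSet (v₀ : α) : Set ℝ :=
  {x | ∃ v : ℕ → α, v 0 = v₀ ∧ (∀ k, ∃ i, v (k + 1) = T.child (v k) i) ∧
    ∀ k, x ∈ Icc (T.lo (v k)) (T.hi (v k))}

theorem arity_pos (v : α) : (0 : ℝ) < T.arity v :=
  Nat.cast_pos.2 (two_pos.trans_le (T.two_le_arity v))

/-- The first digit of `u ∈ [0, 1)` in the mixed radix expansion whose base at the node `v` is
`arity v`. -/
noncomputable def digit (v : α) (u : Ico (0 : ℝ) 1) : Fin (T.arity v) :=
  ⟨⌊(u : ℝ) * T.arity v⌋₊, (Nat.floor_lt (mul_nonneg u.2.1 (T.arity_pos v).le)).2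
    (mul_lt_of_lt_one_left (T.arity_pos v) u.2.2)⟩

/-- The shift of the mixed radix expansion: descend to the child selected by the first digit and
keep the remaining digits. -/
noncomputable def shift (s : α × Ico (0 : ℝ) 1) : α × Ico (0 : ℝ) 1 :=
  (T.child s.1 (T.digit s.1 s.2),
    ⟨Int.fract (s.2 * T.arity s.1), Int.fract_nonneg _, Int.fract_lt_one _⟩)

/-- `T.Codes v u x`: the point `x` lies in all intervals of the branch that starts at `v` and is
selected by the mixed radix digits of `u`. -/
def Codes (v : α) (u : Ico (0 : ℝ) 1) (x : ℝ) : Prop :=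
  ∀ k, x ∈ Icc (T.lo (T.shift^[k] (v, u)).1) (T.hi (T.shift^[k] (v, u)).1)

theorem exists_codes (v : α) (u : Ico (0 : ℝ) 1) : ∃ x, T.Codes v u x := by
  have hanti : Antitone fun k ↦
      Icc (T.lo (T.shift^[k] (v, u)).1) (T.hi (T.shift^[k] (v, u)).1) := by
    refine antitone_nat_of_succ_le fun k ↦ ?_
    rw [Function.iterate_succ_apply']
    exact T.child_subset _ _
  exact ⟨_, mem_iInter.1 (ciSup_mem_iInter_Icc_of_antitone_Icc hanti fun k ↦ T.lo_le_hi _)⟩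

variable {T} {v : α} {u u' : Ico (0 : ℝ) 1} {x x' : ℝ}

theorem Codes.mem_limitSet (h : T.Codes v u x) : x ∈ T.limitSet v :=
  ⟨fun k ↦ (T.shift^[k] (v, u)).1, rfl,
    fun k ↦ ⟨_, congrArg Prod.fst (Function.iterate_succ_apply' T.shift k (v, u))⟩, h⟩

theorem Codes.shift (h : T.Codes v u x) :
    T.Codes (T.child v (T.digit v u)) (T.shift (v, u)).2 x :=
  fun k ↦ h (k + 1)

theorem Codes.mem_child (h : T.Codes v u x) :
    x ∈ Icc (T.lo (T.child v (T.digit v u))) (T.hi (T.child v (T.digit v u))) :=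
  h 1

variable (T v) in
theorem mul_arity_eq_digit_add (u : Ico (0 : ℝ) 1) :
    (u : ℝ) * T.arity v = (T.digit v u : ℕ) + ((T.shift (v, u)).2 : ℝ) := by
  have hnonneg : 0 ≤ u * (T.arity v : ℝ) := mul_nonneg u.2.1 (T.arity_pos v).le
  exact (natCast_floor_eq_intCast_floor hnonneg ▸ (Int.floor_add_fract _).symm :)

theorem hi_child_add_mul_gap_le {i j : Fin (T.arity v)} (hij : i < j) :
    T.hi (T.child v i) + ((j : ℕ) - (i : ℕ)) * T.gap v ≤ T.lo (T.child v j) := by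
  obtain ⟨i, hi⟩ := i
  obtain ⟨j, hj⟩ := j
  replace hij : i + 1 ≤ j := hij
  induction j, hij using Nat.le_induction with
  | base => simpa using T.separated v ⟨i, hi⟩ ⟨i + 1, hj⟩ (Nat.lt_succ_self i)
  | succ j _ ih =>
    have hprev := ih (by omega)
    have hsep := T.separated v ⟨j, by omega⟩ ⟨j + 1, hj⟩ (Nat.lt_succ_self j)
    have hle := T.lo_le_hi (T.child v ⟨j, by omega⟩)
    push_cast at hprev ⊢
    linarith

theorem abs_sub_mul_arity_le_of_digit_lt (hlt : T.digit v u < T.digit v u') :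
    |(u - u' : ℝ)| * T.arity v ≤ 2 * ((T.digit v u' : ℕ) - (T.digit v u : ℕ)) := by
  have hexp := T.mul_arity_eq_digit_add v u
  have hexp' := T.mul_arity_eq_digit_add v u'
  obtain ⟨hlo, hhi⟩ := (T.shift (v, u)).2.2
  obtain ⟨hlo', hhi'⟩ := (T.shift (v, u')).2.2
  have hone : ((T.digit v u : ℕ) : ℝ) + 1 ≤ (T.digit v u' : ℕ) := by exact_mod_cast hlt
  rw [← abs_of_pos (T.arity_pos v), ← abs_mul, sub_mul, abs_le]
  constructor <;> linarith

theorem Codes.digit_sub_mul_gap_le (hx : T.Codes v u x) (hx' : T.Codes v u' x')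
    (hlt : T.digit v u < T.digit v u') :
    ((T.digit v u' : ℕ) - (T.digit v u : ℕ)) * T.gap v ≤ |x - x'| := by
  have hsep := hi_child_add_mul_gap_le hlt
  rw [abs_sub_comm]
  exact le_trans (by linarith [hx.mem_child.2, hx'.mem_child.1]) (le_abs_self _)

/-- If the first digits differ by `d`, then `|u - u'| ≤ 2 d / arity v`, whereas the points are
`d * gap v` apart. -/
theorem Codes.sub_le_of_digit_lt {B : α → ℝ} {r : ℝ≥0} (hr : r ≤ 1)
    (hB : 1 ≤ B v * (T.arity v * T.gap v) ^ (r : ℝ))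
    (hx : T.Codes v u x) (hx' : T.Codes v u' x') (hlt : T.digit v u < T.digit v u') :
    |(u - u' : ℝ)| ≤ 2 * B v * |x - x'| ^ (r : ℝ) := by
  have hm := T.arity_pos v
  have hgap := T.gap_pos v
  have hBpos : 0 < B v := pos_of_mul_pos_left (one_pos.trans_le hB) (by positivity)
  have hcodes := abs_sub_mul_arity_le_of_digit_lt hlt
  have hpoints := hx.digit_sub_mul_gap_le hx' hlt
  have hpos : ((T.digit v u : ℕ) : ℝ) < (T.digit v u' : ℕ) := by exact_mod_cast hlt
  have hle : ((T.digit v u' : ℕ) : ℝ) ≤ T.arity v := by exact_mod_cast (T.digit v u').2.le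
  set d : ℝ := (T.digit v u' : ℕ) - (T.digit v u : ℕ)
  have hd_pos : 0 < d := sub_pos.2 hpos
  have hd_le : d / T.arity v ≤ 1 :=
    (div_le_one hm).2 ((sub_le_self _ (Nat.cast_nonneg _)).trans hle)
  calc |(u - u' : ℝ)| ≤ 2 * (d / T.arity v) := by rwa [← mul_div_assoc, le_div_iff₀ hm]
    _ ≤ 2 * (d / T.arity v) ^ (r : ℝ) := by
        gcongr
        exact Real.self_le_rpow_of_le_one (by positivity) hd_le (by exact_mod_cast hr)
    _ ≤ 2 * (d / T.arity v) ^ (r : ℝ) * (B v * (T.arity v * T.gap v) ^ (r : ℝ)) :=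
        le_mul_of_one_le_right (by positivity) hB
    _ = 2 * B v * (d * T.gap v) ^ (r : ℝ) := by
        rw [show d * T.gap v = d / T.arity v * (T.arity v * T.gap v) by field_simp,
          Real.mul_rpow (x := d / T.arity v) (by positivity) (by positivity)]
        ring
    _ ≤ 2 * B v * |x - x'| ^ (r : ℝ) := by gcongr

section Holder

variable {B : α → ℝ} {r : ℝ≥0}

/-- As long as the first digits agree, the shift multiplies `|u - u'|` by `arity v ≥ 2`; hence
induction on an exponent `n` with `2 ^ (-n) ≤ |u - u'|`. -/
theorem Codes.sub_le_of_one_le (hr : r ≤ 1)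
    (hB : ∀ v, 1 ≤ B v * (T.arity v * T.gap v) ^ (r : ℝ))
    (hB_child : ∀ v i, B (T.child v i) ≤ T.arity v * B v) (n : ℕ)
    (hx : T.Codes v u x) (hx' : T.Codes v u' x') (hn : 1 ≤ |(u - u' : ℝ)| * 2 ^ n) :
    |(u - u' : ℝ)| ≤ 2 * B v * |x - x'| ^ (r : ℝ) := by
  induction n generalizing v u u' with
  | zero =>
    have hlt : |(u - u' : ℝ)| < 1 :=
      abs_sub_lt_iff.2 ⟨by linarith [u.2.2, u'.2.1], by linarith [u'.2.2, u.2.1]⟩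
    linarith [pow_zero (2 : ℝ)]
  | succ n ih =>
    rcases lt_trichotomy (T.digit v u) (T.digit v u') with hlt | heq | hgt
    · exact hx.sub_le_of_digit_lt hr (hB v) hx' hlt
    · have hm := T.arity_pos v
      have hm_two : (2 : ℝ) ≤ T.arity v := by exact_mod_cast T.two_le_arity v
      have hshift : |((T.shift (v, u)).2 - (T.shift (v, u')).2 : ℝ)| =
          |(u - u' : ℝ)| * T.arity v := by
        have hsub : ((T.shift (v, u)).2 - (T.shift (v, u')).2 : ℝ) = (u - u') * T.arity v := by
          rw [sub_mul, T.mul_arity_eq_digit_add, T.mul_arity_eq_digit_add, heq,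
            add_sub_add_left_eq_sub]
        rw [hsub, abs_mul, abs_of_pos hm]
      have hdist := ih hx.shift (heq ▸ hx'.shift) (by
        rw [hshift]
        calc 1 ≤ |(u - u' : ℝ)| * 2 ^ (n + 1) := hn
          _ = |(u - u' : ℝ)| * 2 * 2 ^ n := by ring
          _ ≤ |(u - u' : ℝ)| * T.arity v * 2 ^ n := by gcongr)
      refine le_of_mul_le_mul_right ?_ hm
      calc |(u - u' : ℝ)| * T.arity v
          ≤ 2 * B (T.child v (T.digit v u)) * |x - x'| ^ (r : ℝ) := hshift ▸ hdist
        _ ≤ 2 * (T.arity v * B v) * |x - x'| ^ (r : ℝ) := by gcongr; exact hB_child v _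
        _ = 2 * B v * |x - x'| ^ (r : ℝ) * T.arity v := by ring
    · rw [abs_sub_comm, abs_sub_comm x]
      exact hx'.sub_le_of_digit_lt hr (hB v) hx hgt

/-- The points of the Cantor set are mapped onto `[0, 1)`, a set of dimension `1`, by an
`r`-Hölder map; the weight `B` controls its Hölder constant below each node. -/
theorem le_dimH_limitSet (hr : r ≤ 1)
    (hB : ∀ v, 1 ≤ B v * (T.arity v * T.gap v) ^ (r : ℝ))
    (hB_child : ∀ v i, B (T.child v i) ≤ T.arity v * B v) (v₀ : α) :
    r ≤ dimH (T.limitSet v₀) := by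
  rcases eq_zero_or_pos r with rfl | hr0
  · simp
  choose point hpoint using T.exists_codes v₀
  have hholder (u u' : Ico (0 : ℝ) 1) :
      |(u - u' : ℝ)| ≤ 2 * B v₀ * |point u - point u'| ^ (r : ℝ) := by
    rcases eq_or_ne u u' with rfl | hne
    · simp [Real.zero_rpow (NNReal.coe_pos.2 hr0).ne']
    have hpos : 0 < |(u - u' : ℝ)| := abs_pos.2 (sub_ne_zero.2 (Subtype.coe_injective.ne hne))
    obtain ⟨n, hn⟩ := pow_unbounded_of_one_lt (1 / |(u - u' : ℝ)|) one_lt_two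
    refine (hpoint u).sub_le_of_one_le hr hB hB_child n (hpoint u') ?_
    exact ((div_lt_iff₀' hpos).1 hn).le
  have hedist : ∀ u ∈ univ, ∀ u' ∈ univ, edist u u' ≤
      (2 * B v₀).toNNReal * edist (point u) (point u') ^ (r : ℝ) := by
    intro u _ u' _
    rw [Subtype.edist_eq, edist_dist, edist_dist, Real.dist_eq, Real.dist_eq,
      ENNReal.ofReal_rpow_of_nonneg (abs_nonneg _) r.coe_nonneg, ← ENNReal.ofReal,
      ← ENNReal.ofReal_mul' (by positivity)]
    exact ENNReal.ofReal_le_ofReal (hholder u u')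
  have hdim : dimH (univ : Set (Ico (0 : ℝ) 1)) = 1 := by
    rw [← isometry_subtype_coe.dimH_image, image_univ, Subtype.range_coe,
      Real.dimH_of_nonempty_interior (by simp), Module.finrank_self, Nat.cast_one]
  have himage := dimH_le_dimH_image_div_of_edist_le hr0 hedist
  rw [hdim, ENNReal.le_div_iff_mul_le (by simp [hr0.ne']) (by simp), one_mul] at himage
  refine himage.trans (dimH_mono ?_)
  rintro _ ⟨u, -, rfl⟩
  exact (hpoint u).mem_limitSet

end Holder

end IntervalTree

/-! ### Windows of rationals -/

/-- The set `E(Ψ, ω)` for `Ψ(q) = q ^ (-τ)` and `ω(q) = C * q ^ (-τ(τ - 1))`. -/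
def criticalSet (τ : ℕ) (C : ℝ) : Set ℝ :=
  ESet (fun q ↦ q ^ (-(τ : ℝ))) (fun q ↦ C * q ^ (-((τ : ℝ) * ((τ : ℝ) - 1))))

theorem one_sub_mul_rpow_mul_rpow_neg (τ q : ℕ) (C : ℝ) :
    (1 - C * (q : ℝ) ^ (-((τ : ℝ) * ((τ : ℝ) - 1)))) * (q : ℝ) ^ (-(τ : ℝ)) =
      1 / (q : ℝ) ^ τ - C / (q : ℝ) ^ (τ * τ) := by
  rcases eq_or_ne q 0 with rfl | hq
  · rcases eq_or_ne τ 0 with rfl | hτ <;> simp_all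
  have hq' : (0 : ℝ) < q := by positivity
  rw [sub_mul, one_mul, mul_assoc, ← Real.rpow_add hq', one_div, ← Real.rpow_natCast,
    ← Real.rpow_natCast, div_eq_mul_inv, ← Real.rpow_neg hq'.le, ← Real.rpow_neg hq'.le]
  push_cast
  ring_nf

theorem mem_criticalSet_iff {τ : ℕ} {C x : ℝ} :
    x ∈ criticalSet τ C ↔
      {pq : ℤ × ℕ | 0 < pq.2 ∧ |x - pq.1 / pq.2| ≤ 1 / (pq.2 : ℝ) ^ τ}.Infinite ∧
        ∃ Q : ℕ, ∀ q : ℕ, Q ≤ q → ∀ p : ℤ,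
          1 / (q : ℝ) ^ τ - C / (q : ℝ) ^ (τ * τ) ≤ |x - p / q| := by
  simp only [criticalSet, ESet, WSet, mem_ofPred_eq, one_sub_mul_rpow_mul_rpow_neg]
  simp only [Real.rpow_neg (Nat.cast_nonneg _), Real.rpow_natCast, one_div]

theorem criticalSet_mono (τ : ℕ) : Monotone (criticalSet τ) := by
  intro C C' hC x hx
  rw [mem_criticalSet_iff] at hx ⊢
  obtain ⟨hx, Q, hQ⟩ := hx
  refine ⟨hx, Q, fun q hq p ↦ le_trans ?_ (hQ q hq p)⟩
  gcongr

theorem one_div_den_mul_le_abs_sub {z : ℚ} {r : ℤ} {s : ℕ} (h : (z : ℝ) ≠ r / s) :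
    1 / ((z.den : ℝ) * s) ≤ |(z : ℝ) - r / s| := by
  rcases eq_or_ne s 0 with rfl | hs
  · simp
  have hne : z.num * s - z.den * r ≠ 0 := fun h0 ↦ h <| by
    rw [Rat.cast_def, div_eq_div_iff (by simp) (by simpa)]
    exact_mod_cast (sub_eq_zero.1 h0).trans (mul_comm _ _)
  rw [Rat.cast_def, div_sub_div _ _ (by simp) (by simpa), abs_div,
    abs_of_nonneg (by positivity : (0 : ℝ) ≤ (z.den : ℝ) * s)]
  gcongr
  exact_mod_cast Int.one_le_abs hne

theorem den_dvd_of_cast_eq_div {z : ℚ} {r : ℤ} {s : ℕ} (h : (z : ℝ) = r / s) : z.den ∣ s := by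
  obtain rfl : z = Rat.divInt r s := by rw [Rat.divInt_eq_div]; exact_mod_cast h
  exact_mod_cast Rat.den_dvd r s

/-- Around a rational `z` distinct from `r / s`, the fraction `r / s` is at distance `1 / (z.den s)`
from `z`, hence far from the points near `z`. -/
theorem one_div_pow_le_abs_sub_of_near {τ : ℕ} {z : ℚ} {x : ℝ} {r : ℤ} {s : ℕ} (hs : 0 < s)
    (hz : (z : ℝ) ≠ r / s) (hx : |x - z| ≤ 1 / (2 * ((z.den : ℝ) * s)))
    (hsτ : 2 * ((z.den : ℝ) * s) ≤ (s : ℝ) ^ τ) : 1 / (s : ℝ) ^ τ ≤ |x - r / s| := by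
  have htriangle := abs_sub_le (z : ℝ) x (r / s)
  rw [abs_sub_comm (z : ℝ) x] at htriangle
  have hsplit : 1 / ((z.den : ℝ) * s) = 2 * (1 / (2 * ((z.den : ℝ) * s))) := by field_simp
  calc 1 / (s : ℝ) ^ τ ≤ 1 / (2 * ((z.den : ℝ) * s)) := by gcongr
    _ ≤ |x - r / s| := by linarith [one_div_den_mul_le_abs_sub hz]

theorem den_add_one_div_den_pow (v : ℚ) {n : ℕ} (hn : 2 ≤ n) :
    (v + 1 / (v.den : ℚ) ^ n).den = v.den ^ n := by
  obtain ⟨m, rfl⟩ := Nat.exists_eq_add_of_le' hn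
  have hcoprime : IsCoprime (v.num * v.den ^ (m + 1) + 1) ((v.den : ℤ) ^ (m + 2)) :=
    IsCoprime.pow_right ⟨1, -(v.num * v.den ^ m), by ring⟩
  have hfrac : v + 1 / (v.den : ℚ) ^ (m + 2) =
      ((v.num * v.den ^ (m + 1) + 1 : ℤ) : ℚ) / ((v.den ^ (m + 2) : ℤ) : ℚ) := by
    have hden : (v.den : ℚ) ≠ 0 := by simp
    nth_rw 1 [← Rat.num_div_den v]
    push_cast
    field_simp
    ring
  zify
  rw [hfrac, Rat.den_div_eq_of_coprime (by positivity) (Int.isCoprime_iff_nat_coprime.1 hcoprime)]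

/-- The point `v + q ^ (-τ) - θ q ^ (-τ²)`, where `q` is the denominator of `v`. -/
noncomputable def windowPoint (τ : ℕ) (θ : ℝ) (v : ℚ) : ℝ :=
  v + 1 / (v.den : ℝ) ^ τ - θ / (v.den : ℝ) ^ (τ * τ)

/-- The window of a rational `v`: the points `x` for which `x - v` is between
`q ^ (-τ) - C q ^ (-τ²)` and `q ^ (-τ) - q ^ (-τ²)`, where `q` is the denominator of `v`. -/
def window (τ : ℕ) (C : ℝ) (v : ℚ) : Set ℝ :=
  Icc (windowPoint τ C v) (windowPoint τ 1 v)

section Window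

variable {τ : ℕ} {v : ℚ} {C x : ℝ}

theorem windowPoint_sub_mem_Icc {θ : ℝ} (hτ : 2 ≤ τ) (hv : 2 ≤ v.den) (hθ : θ ∈ Icc 0 2) :
    windowPoint τ θ v - v ∈ Icc (1 / (2 * (v.den : ℝ) ^ τ)) (1 / (v.den : ℝ) ^ τ) := by
  have hq : (2 : ℝ) ≤ v.den := by exact_mod_cast hv
  have hpow : (v.den : ℝ) ^ τ * 4 ≤ (v.den : ℝ) ^ (τ * τ) := by
    calc (v.den : ℝ) ^ τ * 4 = (v.den : ℝ) ^ τ * 2 ^ 2 := by norm_num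
      _ ≤ (v.den : ℝ) ^ τ * (v.den : ℝ) ^ τ := by
        gcongr ?_ * ?_
        exact (pow_le_pow_left₀ zero_le_two hq 2).trans (pow_le_pow_right₀ (by linarith) hτ)
      _ = (v.den : ℝ) ^ (τ + τ) := (pow_add _ _ _).symm
      _ ≤ (v.den : ℝ) ^ (τ * τ) := pow_le_pow_right₀ (by linarith) (by nlinarith)
  have hhalf : 1 / (v.den : ℝ) ^ τ = 2 * (1 / (2 * (v.den : ℝ) ^ τ)) := by field_simp
  have hsmall : θ / (v.den : ℝ) ^ (τ * τ) ≤ 1 / (2 * (v.den : ℝ) ^ τ) := by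
    calc θ / (v.den : ℝ) ^ (τ * τ) ≤ 2 / ((v.den : ℝ) ^ τ * 4) := by
          gcongr
          exact hθ.2
      _ = 1 / (2 * (v.den : ℝ) ^ τ) := by field_simp; norm_num
  have hnonneg : 0 ≤ θ / (v.den : ℝ) ^ (τ * τ) := div_nonneg hθ.1 (by positivity)
  rw [windowPoint]
  constructor <;> linarith

variable (hτ : 3 ≤ τ) (hv : 8 ≤ v.den) (hC : C ≤ 2) (hx : x ∈ window τ C v)
include hx

theorem one_le_of_mem_window : 1 ≤ C := by
  have hle := hx.1.trans hx.2
  rw [windowPoint, windowPoint, sub_le_sub_iff_left] at hle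
  exact (div_le_div_iff_of_pos_right (by positivity)).1 hle

theorem abs_sub_add_le_of_mem_window :
    |x - (v + 1 / (v.den : ℝ) ^ τ)| ≤ C / (v.den : ℝ) ^ (τ * τ) := by
  have hlo := hx.1
  have hhi := hx.2
  rw [windowPoint] at hlo hhi
  have hone : 0 ≤ 1 / (v.den : ℝ) ^ (τ * τ) := by positivity
  rw [abs_le]
  constructor <;> linarith

include hτ hv hC

theorem sub_mem_Icc_of_mem_window :
    x - v ∈ Icc (1 / (2 * (v.den : ℝ) ^ τ)) (1 / (v.den : ℝ) ^ τ) := by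
  have hlo := windowPoint_sub_mem_Icc (θ := C) (by omega : 2 ≤ τ) (by omega : 2 ≤ v.den)
    ⟨by linarith [one_le_of_mem_window hx], hC⟩
  have hhi := windowPoint_sub_mem_Icc (θ := 1) (by omega : 2 ≤ τ) (by omega : 2 ≤ v.den)
    ⟨by norm_num, by norm_num⟩
  exact ⟨hlo.1.trans (sub_le_sub_right hx.1 _), (sub_le_sub_right hx.2 _).trans hhi.2⟩

theorem abs_sub_le_of_mem_window : |x - v| ≤ 1 / (v.den : ℝ) ^ τ := by
  obtain ⟨hlo, hhi⟩ := sub_mem_Icc_of_mem_window hτ hv hC hx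
  rwa [abs_of_nonneg (le_trans (by positivity) hlo)]

/-- Only the reduced representation of `v` uses the left end of the window. -/
theorem window_lower_of_eq {r : ℤ} {s : ℕ} (hs : 0 < s) (hr : (v : ℝ) = r / s) :
    1 / (s : ℝ) ^ τ - C / (s : ℝ) ^ (τ * τ) ≤ |x - r / s| := by
  rw [← hr]
  refine le_trans ?_ (le_abs_self _)
  obtain ⟨j, rfl⟩ := den_dvd_of_cast_eq_div hr
  have hj : 0 < j := Nat.pos_of_mul_pos_left hs
  rcases (Nat.one_le_iff_ne_zero.2 hj.ne').eq_or_lt with rfl | hj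
  · have hlo := hx.1
    rw [windowPoint] at hlo
    rw [mul_one]
    linarith
  · have hC0 : 0 ≤ C := zero_le_one.trans (one_le_of_mem_window hx)
    have hpow : 2 * (v.den : ℝ) ^ τ ≤ ((v.den * j : ℕ) : ℝ) ^ τ := by
      calc 2 * (v.den : ℝ) ^ τ ≤ (j : ℝ) ^ τ * (v.den : ℝ) ^ τ := by
            gcongr
            exact (by exact_mod_cast hj : (2 : ℝ) ≤ j).trans
              (le_self_pow₀ (by exact_mod_cast hj.le) (by omega))
        _ = ((v.den * j : ℕ) : ℝ) ^ τ := by push_cast; ring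
    calc _ ≤ 1 / ((v.den * j : ℕ) : ℝ) ^ τ := sub_le_self _ (by positivity)
      _ ≤ 1 / (2 * (v.den : ℝ) ^ τ) := by gcongr
      _ ≤ x - v := (sub_mem_Icc_of_mem_window hτ hv hC hx).1

theorem one_div_pow_le_abs_sub_of_two_mul_le {r : ℤ} {s : ℕ} (hs : v.den ≤ s)
    (hr : (v : ℝ) ≠ r / s) (hs' : 2 * (s : ℝ) ≤ (v.den : ℝ) ^ (τ - 1)) :
    1 / (s : ℝ) ^ τ ≤ |x - r / s| := by
  have hs0 : 0 < s := v.den_pos.trans_le hs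
  have hqs : (v.den : ℝ) ≤ s := by exact_mod_cast hs
  have hs8 : (8 : ℝ) ≤ s := by exact_mod_cast hv.trans hs
  refine one_div_pow_le_abs_sub_of_near hs0 hr ?_ ?_
  · calc |x - v| ≤ 1 / (v.den : ℝ) ^ τ := abs_sub_le_of_mem_window hτ hv hC hx
      _ = 1 / (v.den * (v.den : ℝ) ^ (τ - 1)) := by rw [mul_pow_sub_one (by omega)]
      _ ≤ 1 / (v.den * (2 * s)) := by gcongr
      _ = 1 / (2 * (v.den * s)) := by rw [mul_left_comm]
  · calc 2 * ((v.den : ℝ) * s) ≤ 8 * (s * s) := by gcongr; norm_num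
      _ ≤ s * (s * s) := by gcongr
      _ = (s : ℝ) ^ 3 := by ring
      _ ≤ (s : ℝ) ^ τ := pow_le_pow_right₀ (by linarith) hτ

omit hv hC in
theorem one_div_pow_le_abs_sub_of_add_eq {r : ℤ} {s : ℕ} (hs : 0 < s)
    (hr : (v : ℝ) + 1 / (v.den : ℝ) ^ τ = r / s) : 1 / (s : ℝ) ^ τ ≤ |x - r / s| := by
  have hcast : ((v + 1 / (v.den : ℚ) ^ τ : ℚ) : ℝ) = r / s := by push_cast; exact hr
  have hdvd : v.den ^ τ ∣ s :=
    den_add_one_div_den_pow v (by omega : 2 ≤ τ) ▸ den_dvd_of_cast_eq_div hcast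
  have hle : (v.den : ℝ) ^ τ ≤ s := by exact_mod_cast Nat.le_of_dvd hs hdvd
  calc 1 / (s : ℝ) ^ τ ≤ 1 / ((v.den : ℝ) ^ τ) ^ τ := by gcongr
    _ = 1 / (v.den : ℝ) ^ (τ * τ) := by rw [pow_mul]
    _ ≤ r / s - x := by linarith [hx.2, windowPoint.eq_1 τ 1 v]
    _ ≤ |x - r / s| := by rw [abs_sub_comm]; exact le_abs_self _

theorem one_div_pow_le_abs_sub_of_lt_two_mul {r : ℤ} {s : ℕ}
    (hr : (v : ℝ) + 1 / (v.den : ℝ) ^ τ ≠ r / s) (hs : (v.den : ℝ) ^ (τ - 1) < 2 * s)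
    (hs' : 4 * s ≤ v.den ^ (τ * (τ - 1))) : 1 / (s : ℝ) ^ τ ≤ |x - r / s| := by
  have hq : (8 : ℝ) ≤ v.den := by exact_mod_cast hv
  have hq2 : (v.den : ℝ) ^ 2 ≤ (v.den : ℝ) ^ (τ - 1) := pow_le_pow_right₀ (by linarith) (by omega)
  have hs4 : 4 * (s : ℝ) ≤ (v.den : ℝ) ^ (τ * (τ - 1)) := by exact_mod_cast hs'
  have hs1 : (1 : ℝ) ≤ s := by nlinarith
  have ht_den : (v + 1 / (v.den : ℚ) ^ τ).den = v.den ^ τ := den_add_one_div_den_pow v (by omega)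
  have ht_cast : ((v + 1 / (v.den : ℚ) ^ τ : ℚ) : ℝ) = v + 1 / (v.den : ℝ) ^ τ := by push_cast; rfl
  refine one_div_pow_le_abs_sub_of_near (by exact_mod_cast hs1) (by rwa [ht_cast]) ?_ ?_
  · rw [ht_cast, ht_den]
    calc |x - (v + 1 / (v.den : ℝ) ^ τ)| ≤ C / (v.den : ℝ) ^ (τ * τ) :=
          abs_sub_add_le_of_mem_window hx
      _ ≤ 2 / (v.den : ℝ) ^ (τ * τ) := by gcongr
      _ = 2 / ((v.den : ℝ) ^ τ * (v.den : ℝ) ^ (τ * (τ - 1))) := by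
        rw [← pow_add, Nat.mul_sub_one, Nat.add_sub_cancel' (Nat.le_mul_self τ)]
      _ ≤ 2 / ((v.den : ℝ) ^ τ * (4 * s)) := by gcongr
      _ = 1 / (2 * (((v.den ^ τ : ℕ) : ℝ) * s)) := by push_cast; field_simp; norm_num
  · rw [ht_den, Nat.cast_pow, ← mul_pow_sub_one (by omega : τ ≠ 0) (v.den : ℝ)]
    calc 2 * (v.den * (v.den : ℝ) ^ (τ - 1) * s) ≤ 2 * (v.den * (2 * s) * s) := by gcongr
      _ = 4 * v.den * s ^ 2 := by ring
      _ ≤ s * s ^ 2 := by gcongr; nlinarith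
      _ = s ^ 3 := by ring
      _ ≤ (s : ℝ) ^ τ := pow_le_pow_right₀ hs1 hτ

/-- Up to `q ^ (τ - 1) / 2` the denominator `s` is so small that `r / s` is repelled by `v`, and
beyond that it is repelled by `v + q ^ (-τ)`, a reduced fraction of denominator `q ^ τ`. -/
theorem window_lower {r : ℤ} {s : ℕ} (hs : v.den ≤ s) (hs' : 4 * s ≤ v.den ^ (τ * (τ - 1))) :
    1 / (s : ℝ) ^ τ - C / (s : ℝ) ^ (τ * τ) ≤ |x - r / s| := by
  have hs0 : 0 < s := v.den_pos.trans_le hs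
  have hC0 : 0 ≤ C := zero_le_one.trans (one_le_of_mem_window hx)
  rcases eq_or_ne (v : ℝ) (r / s) with hr | hr
  · exact window_lower_of_eq hτ hv hC hx hs0 hr
  refine (sub_le_self _ (by positivity)).trans ?_
  rcases eq_or_ne ((v : ℝ) + 1 / (v.den : ℝ) ^ τ) (r / s) with ht | ht
  · exact one_div_pow_le_abs_sub_of_add_eq hτ hx hs0 ht
  rcases le_or_gt (2 * (s : ℝ)) ((v.den : ℝ) ^ (τ - 1)) with hsmall | hlarge
  · exact one_div_pow_le_abs_sub_of_two_mul_le hτ hv hC hx hs hr hsmall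
  · exact one_div_pow_le_abs_sub_of_lt_two_mul hτ hv hC hx ht hlarge hs'

end Window

/-- `w` stays at distance at least `2 s ^ (-τ)` from all fractions `r / s` with
`S < s < w.den`. -/
def Avoids (τ S : ℕ) (w : ℚ) : Prop :=
  ∀ (s : ℕ) (r : ℤ), S < s → s < w.den → 2 / (s : ℝ) ^ τ ≤ |(w : ℝ) - r / s|

theorem mem_criticalSet_of_mem_window {τ : ℕ} {C x : ℝ} (hτ : 3 ≤ τ) (hC : C ≤ 2) {v : ℕ → ℚ}
    (hv : ∀ k, 8 ≤ (v k).den) (hden : StrictMono fun k ↦ (v k).den)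
    (hav : ∀ k, Avoids τ ((v k).den ^ (τ * (τ - 1)) / 4) (v (k + 1)))
    (hx : ∀ k, x ∈ window τ C (v k)) : x ∈ criticalSet τ C := by
  have hnear (k : ℕ) : |x - v k| ≤ 1 / ((v k).den : ℝ) ^ τ :=
    abs_sub_le_of_mem_window hτ (hv k) hC (hx k)
  refine mem_criticalSet_iff.2 ⟨?_, (v 0).den, fun s hs r ↦ ?_⟩
  · refine infinite_of_injective_forall_mem (f := fun k ↦ ((v k).num, (v k).den))
      (fun _ _ h ↦ hden.injective (congrArg Prod.snd h)) fun k ↦ ⟨(v k).den_pos, ?_⟩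
    simpa only [Rat.cast_def] using hnear k
  obtain ⟨k, hk⟩ : ∃ k, s ∈ Ico (v k).den (v (k + 1)).den := by
    have hcover := iUnion_Ico_map_succ_eq_Ici (fun k ↦ hden.monotone k.zero_le)
      hden.not_bddAbove_range_of_wellFoundedLT
    exact mem_iUnion.1 (hcover.ge hs)
  rcases le_or_gt s ((v k).den ^ (τ * (τ - 1)) / 4) with hsmall | hlarge
  · exact window_lower hτ (hv k) hC (hx k) hk.1 (by omega)
  have hs0 : (0 : ℝ) < s := Nat.cast_pos.2 ((v 0).den_pos.trans_le hs)
  have hC0 : 0 ≤ C := zero_le_one.trans (one_le_of_mem_window (hx 0))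
  have hfar := hav k s r hlarge hk.2
  have hnear' : |x - v (k + 1)| ≤ 1 / (s : ℝ) ^ τ := by
    refine (hnear (k + 1)).trans ?_
    gcongr
    exact hk.2.le
  have htriangle := abs_sub_le (v (k + 1) : ℝ) x (r / s)
  rw [abs_sub_comm _ x] at htriangle
  have htwo : 2 / (s : ℝ) ^ τ = 1 / (s : ℝ) ^ τ + 1 / (s : ℝ) ^ τ := by ring
  have hnonneg : 0 ≤ C / (s : ℝ) ^ (τ * τ) := by positivity
  linarith

/-! ### Points far from fractions -/

/-- The closed `ρ`-neighbourhood of the fractions `r / s`, `r ∈ ℤ`. -/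
def nearFractions (s : ℕ) (ρ : ℝ) : Set ℝ :=
  {y | ∃ r : ℤ, |y - r / s| ≤ ρ}

theorem volume_le_of_subset_biUnion_closedBall {ι : Type*} {U : Set ℝ} {F : Finset ι}
    {c : ι → ℝ} {ρ : ℝ} (hU : U ⊆ ⋃ i ∈ F, Metric.closedBall (c i) ρ) :
    volume U ≤ ENNReal.ofReal (F.card * (2 * ρ)) := by
  calc volume U ≤ volume (⋃ i ∈ F, Metric.closedBall (c i) ρ) := measure_mono hU
    _ ≤ ∑ i ∈ F, volume (Metric.closedBall (c i) ρ) := measure_biUnion_finset_le _ _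
    _ = ENNReal.ofReal (F.card * (2 * ρ)) := by
        simp only [Real.volume_closedBall, Finset.sum_const, nsmul_eq_mul,
          ENNReal.ofReal_mul (Nat.cast_nonneg F.card), ENNReal.ofReal_natCast]

theorem volume_Icc_inter_nearFractions_le {a b ρ : ℝ} {s : ℕ} (hab : a ≤ b) (hs : 0 < s)
    (hρ : 0 ≤ ρ) :
    volume (Icc a b ∩ nearFractions s ρ) ≤
      ENNReal.ofReal ((s * (b - a) + 2 * (s * ρ) + 1) * (2 * ρ)) := by
  have hs' : (0 : ℝ) < s := Nat.cast_pos.2 hs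
  set F : Finset ℤ := Finset.Icc ⌈s * (a - ρ)⌉ ⌊s * (b + ρ)⌋ with hF
  have hcover : Icc a b ∩ nearFractions s ρ ⊆ ⋃ r ∈ F, Metric.closedBall ((r : ℝ) / s) ρ := by
    rintro y ⟨⟨hay, hyb⟩, r, hr⟩
    refine mem_iUnion₂.2 ⟨r, ?_, by rwa [Metric.mem_closedBall, Real.dist_eq]⟩
    rw [abs_le] at hr
    rw [hF, Finset.mem_Icc, Int.ceil_le, Int.le_floor, ← div_le_iff₀' hs', ← le_div_iff₀' hs']
    constructor <;> linarith
  have hcard : (F.card : ℝ) ≤ s * (b - a) + 2 * (s * ρ) + 1 := by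
    rw [hF, Int.card_Icc, ← Int.cast_natCast, Int.ofNat_toNat, Int.cast_max]
    push_cast
    refine max_le ?_ (by positivity)
    linarith [Int.floor_le (s * (b + ρ)), Int.le_ceil (s * (a - ρ))]
  refine (volume_le_of_subset_biUnion_closedBall hcover).trans (ENNReal.ofReal_le_ofReal ?_)
  gcongr

theorem measure_inter_biUnion_finset_le_ofReal_sum {α ι : Type*} [MeasurableSpace α]
    {μ : Measure α} {J : Set α} {U : ι → Set α} {F : Finset ι} {f : ι → ℝ}
    (hf : ∀ i ∈ F, 0 ≤ f i) (hU : ∀ i ∈ F, μ (J ∩ U i) ≤ ENNReal.ofReal (f i)) :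
    μ (J ∩ ⋃ i ∈ F, U i) ≤ ENNReal.ofReal (∑ i ∈ F, f i) := by
  rw [inter_iUnion₂, ENNReal.ofReal_sum_of_nonneg hf]
  exact (measure_biUnion_finset_le _ _).trans (Finset.sum_le_sum hU)

theorem volume_Icc_inter_nearFractions_div_pow_le {τ S s : ℕ} {a b c : ℝ} (hτ : 3 ≤ τ)
    (hS : 0 < S) (hSs : S ≤ s) (hab : a ≤ b) (hc : 0 ≤ c) :
    volume (Icc a b ∩ nearFractions s (c / (s : ℝ) ^ τ)) ≤ ENNReal.ofReal
      ((2 * c * (b - a) + 2 * c * (2 * c + 1) / (S : ℝ) ^ (τ - 2)) * ((s : ℝ) ^ 2)⁻¹) := by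
  have hSs' : (S : ℝ) ≤ s := by exact_mod_cast hSs
  have hs1 : (1 : ℝ) ≤ s := by exact_mod_cast (hS.trans_le hSs)
  refine (volume_Icc_inter_nearFractions_le hab (hS.trans_le hSs) (by positivity)).trans
    (ENNReal.ofReal_le_ofReal ?_)
  have hpow : (s : ℝ) ^ τ = s ^ 2 * s ^ (τ - 2) := (pow_mul_pow_sub _ (by omega)).symm
  have hself : (s : ℝ) ≤ (s : ℝ) ^ (τ - 2) := le_self_pow₀ hs1 (by omega)
  have hsρ : s * (c / (s : ℝ) ^ τ) ≤ c := by
    rw [mul_div_left_comm]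
    exact mul_le_of_le_one_right hc
      (div_le_one_of_le₀ (le_self_pow₀ hs1 (by omega)) (by positivity))
  calc (s * (b - a) + 2 * (s * (c / (s : ℝ) ^ τ)) + 1) * (2 * (c / (s : ℝ) ^ τ))
      ≤ (s * (b - a) + 2 * c + 1) * (2 * (c / (s : ℝ) ^ τ)) := by gcongr
    _ = (2 * c * (b - a) * (s / (s : ℝ) ^ (τ - 2)) +
        2 * c * (2 * c + 1) / (s : ℝ) ^ (τ - 2)) * ((s : ℝ) ^ 2)⁻¹ := by
      rw [hpow]
      field_simp
      ring
    _ ≤ (2 * c * (b - a) * 1 + 2 * c * (2 * c + 1) / (S : ℝ) ^ (τ - 2)) * ((s : ℝ) ^ 2)⁻¹ := by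
      gcongr
      exact div_le_one_of_le₀ hself (by positivity)
    _ = _ := by rw [mul_one]

theorem volume_Icc_inter_biUnion_nearFractions_div_pow_le {τ S : ℕ} {a b c : ℝ} (hτ : 3 ≤ τ)
    (hS : 0 < S) (hab : a ≤ b) (hc : 0 ≤ c) (N : ℕ) :
    volume (Icc a b ∩ ⋃ s ∈ Finset.Ioc S N, nearFractions s (c / (s : ℝ) ^ τ)) ≤
      ENNReal.ofReal ((2 * c * (b - a) + 2 * c * (2 * c + 1) / (S : ℝ) ^ (τ - 2)) / S) := by
  refine (measure_inter_biUnion_finset_le_ofReal_sum (μ := volume) (fun s _ ↦ by positivity)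
    fun s hs ↦ volume_Icc_inter_nearFractions_div_pow_le hτ hS (Finset.mem_Ioc.1 hs).1.le hab
      hc).trans (ENNReal.ofReal_le_ofReal ?_)
  rw [← Finset.mul_sum, div_eq_mul_inv]
  refine mul_le_mul_of_nonneg_left ?_ (by positivity)
  rcases le_total S N with hSN | hNS
  · exact (sum_Ioc_inv_sq_le_sub hS.ne' hSN).trans (sub_le_self _ (by positivity))
  · rw [Finset.Ioc_eq_empty_of_le hNS, Finset.sum_empty]
    positivity

theorem volume_Icc_inter_biUnion_nearFractions_one_div_mul_le {a b : ℝ} {N : ℕ} (hab : a ≤ b)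
    (hN : 0 < N) (M : ℕ) :
    volume (Icc a b ∩ ⋃ s ∈ Finset.Icc 1 M, nearFractions s (1 / ((s : ℝ) * N))) ≤
      ENNReal.ofReal (2 * (b - a) * M / N + 6 * (1 + Real.log M) / N) := by
  have hN1 : (1 : ℝ) ≤ N := by exact_mod_cast hN
  refine (measure_inter_biUnion_finset_le_ofReal_sum (μ := volume)
    (f := fun s : ℕ ↦ 2 * (b - a) / N + 6 / N * (s : ℝ)⁻¹)
    (fun s _ ↦ by positivity) fun s hs ↦ ?_).trans (ENNReal.ofReal_le_ofReal ?_)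
  · have hs0 : 0 < s := (Finset.mem_Icc.1 hs).1
    have hs' : (0 : ℝ) < s := Nat.cast_pos.2 hs0
    refine (volume_Icc_inter_nearFractions_le hab hs0 (by positivity)).trans
      (ENNReal.ofReal_le_ofReal ?_)
    have hsρ : s * (1 / ((s : ℝ) * N)) ≤ 1 := by
      rw [mul_one_div, div_mul_cancel_left₀ hs'.ne']
      exact inv_le_one_of_one_le₀ hN1
    calc (s * (b - a) + 2 * (s * (1 / ((s : ℝ) * N))) + 1) * (2 * (1 / ((s : ℝ) * N)))
        ≤ (s * (b - a) + 2 * 1 + 1) * (2 * (1 / ((s : ℝ) * N))) := by gcongr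
      _ = 2 * (b - a) / N + 6 / N * (s : ℝ)⁻¹ := by field_simp; ring
  · have hharmonic : ∑ s ∈ Finset.Icc 1 M, (s : ℝ)⁻¹ ≤ 1 + Real.log M := by
      have hle := harmonic_le_one_add_log M
      rw [harmonic_eq_sum_Icc] at hle
      push_cast at hle
      exact hle
    rw [Finset.sum_add_distrib, Finset.sum_const, Nat.card_Icc, ← Finset.mul_sum,
      add_tsub_cancel_right, nsmul_eq_mul]
    calc M * (2 * (b - a) / N) + 6 / N * ∑ s ∈ Finset.Icc 1 M, (s : ℝ)⁻¹
        ≤ M * (2 * (b - a) / N) + 6 / N * (1 + Real.log M) := by gcongr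
      _ = 2 * (b - a) * M / N + 6 * (1 + Real.log M) / N := by ring

/-- The points that are `3 s ^ (-τ)`-far from all fractions of denominator `s ∈ (S, N]` and
`1 / (s N)`-far from all fractions of denominator `s ≤ N / 16`. -/
def farPoints (τ S N : ℕ) : Set ℝ :=
  {y | (∀ (s : ℕ) (r : ℤ), S < s → s ≤ N → 3 / (s : ℝ) ^ τ < |y - r / s|) ∧
    ∀ (s : ℕ) (r : ℤ), 0 < s → 16 * s ≤ N → 1 / ((s : ℝ) * N) < |y - r / s|}

theorem compl_union_nearFractions_subset_farPoints (τ S N : ℕ) :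
    ((⋃ s ∈ Finset.Ioc S N, nearFractions s (3 / (s : ℝ) ^ τ)) ∪
      ⋃ s ∈ Finset.Icc 1 (N / 16), nearFractions s (1 / ((s : ℝ) * N)))ᶜ ⊆ farPoints τ S N := by
  intro y hy
  simp only [nearFractions, compl_union, compl_iUnion, mem_inter_iff, mem_iInter, mem_compl_iff,
    mem_ofPred_eq, not_exists, not_le, Finset.mem_Ioc, Finset.mem_Icc] at hy
  exact ⟨fun s r hSs hsN ↦ hy.1 s ⟨hSs, hsN⟩ r, fun s r hs hsN ↦ hy.2 s ⟨hs, by omega⟩ r⟩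

theorem volume_Icc_inter_biUnion_nearFractions_three_div_pow_le {τ S : ℕ} {a b : ℝ}
    (hτ : 3 ≤ τ) (hS : 48 ≤ S) (hab : a ≤ b) (hℓS : 336 ≤ (b - a) * (S : ℝ) ^ (τ - 1)) (N : ℕ) :
    volume (Icc a b ∩ ⋃ s ∈ Finset.Ioc S N, nearFractions s (3 / (s : ℝ) ^ τ)) ≤
      ENNReal.ofReal ((b - a) / 4) := by
  have hS' : (48 : ℝ) ≤ S := by exact_mod_cast hS
  refine (volume_Icc_inter_biUnion_nearFractions_div_pow_le hτ (by omega) hab zero_le_three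
    N).trans (ENNReal.ofReal_le_ofReal ?_)
  have hpow : (S : ℝ) ^ (τ - 1) = S ^ (τ - 2) * S := by
    rw [← pow_succ, show τ - 2 + 1 = τ - 1 by omega]
  rw [add_div, div_div, ← hpow]
  have hfirst : 2 * 3 * (b - a) / S ≤ (b - a) / 8 := by
    rw [div_le_iff₀ (by positivity)]
    nlinarith
  have hsecond : 2 * 3 * (2 * 3 + 1) / (S : ℝ) ^ (τ - 1) ≤ (b - a) / 8 := by
    rw [div_le_iff₀ (by positivity)]
    linarith
  linarith

theorem volume_Icc_inter_biUnion_nearFractions_le_div_four {N : ℕ} {a b : ℝ} (hN : 0 < N)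
    (hab : a ≤ b) (hℓN : 48 * (1 + Real.log N) / N ≤ b - a) :
    volume (Icc a b ∩ ⋃ s ∈ Finset.Icc 1 (N / 16), nearFractions s (1 / ((s : ℝ) * N))) ≤
      ENNReal.ofReal ((b - a) / 4) := by
  have hℓ : 0 ≤ b - a := sub_nonneg.2 hab
  have hN1 : (1 : ℝ) ≤ N := by exact_mod_cast hN
  refine (volume_Icc_inter_biUnion_nearFractions_one_div_mul_le hab hN _).trans
    (ENNReal.ofReal_le_ofReal ?_)
  have hM : ((N / 16 : ℕ) : ℝ) ≤ N / 16 := Nat.cast_div_le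
  have hfirst : 2 * (b - a) * ((N / 16 : ℕ) : ℝ) / N ≤ (b - a) / 8 := by
    rw [div_le_iff₀ (by positivity)]
    nlinarith
  have hlog : Real.log ((N / 16 : ℕ) : ℝ) ≤ Real.log N := by
    rcases Nat.eq_zero_or_pos (N / 16) with h0 | hpos
    · rw [h0, Nat.cast_zero, Real.log_zero]
      exact Real.log_nonneg hN1
    · exact Real.log_le_log (Nat.cast_pos.2 hpos) (by linarith)
  have hsecond : 6 * (1 + Real.log ((N / 16 : ℕ) : ℝ)) / N ≤ (b - a) / 8 := by
    rw [div_le_iff₀ (by positivity)] at hℓN ⊢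
    linarith
  linarith

theorem half_le_volume_Icc_inter_farPoints {τ S N : ℕ} {a b : ℝ} (hτ : 3 ≤ τ) (hS : 48 ≤ S)
    (hN : 0 < N) (hab : a ≤ b) (hℓS : 336 ≤ (b - a) * (S : ℝ) ^ (τ - 1))
    (hℓN : 48 * (1 + Real.log N) / N ≤ b - a) :
    ENNReal.ofReal ((b - a) / 2) ≤ volume (Icc a b ∩ farPoints τ S N) := by
  have hU := volume_Icc_inter_biUnion_nearFractions_three_div_pow_le hτ hS hab hℓS N
  have hV := volume_Icc_inter_biUnion_nearFractions_le_div_four hN hab hℓN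
  set U := ⋃ s ∈ Finset.Ioc S N, nearFractions s (3 / (s : ℝ) ^ τ)
  set V := ⋃ s ∈ Finset.Icc 1 (N / 16), nearFractions s (1 / ((s : ℝ) * N))
  calc ENNReal.ofReal ((b - a) / 2)
      = volume (Icc a b) - ENNReal.ofReal ((b - a) / 2) := by
        rw [Real.volume_Icc, ← ENNReal.ofReal_sub _ (by positivity), sub_half]
    _ = volume (Icc a b) - (ENNReal.ofReal ((b - a) / 4) + ENNReal.ofReal ((b - a) / 4)) := by
        rw [← ENNReal.ofReal_add (by positivity) (by positivity)]
        ring_nf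
    _ ≤ volume (Icc a b) - volume (Icc a b ∩ (U ∪ V)) := by
        rw [inter_union_distrib_left]
        gcongr
        exact (measure_union_le _ _).trans (add_le_add hU hV)
    _ ≤ volume (Icc a b \ (Icc a b ∩ (U ∪ V))) := le_measure_sdiff
    _ ≤ volume (Icc a b ∩ farPoints τ S N) := by
        rw [sdiff_self_inter, sdiff_eq]
        exact measure_mono (inter_subset_inter_right _
          (compl_union_nearFractions_subset_farPoints τ S N))

theorem finite_setOf_den_le_and_mem_Icc (N : ℕ) (a b : ℝ) :
    {w : ℚ | w.den ≤ N ∧ (w : ℝ) ∈ Icc a b}.Finite := by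
  set M : ℝ := max |a| |b| * N
  have hinj : Function.Injective fun w : ℚ ↦ (w.num, w.den) := fun w w' h ↦
    Rat.ext (congrArg Prod.fst h) (congrArg Prod.snd h)
  refine (((finite_Icc ⌈-M⌉ ⌊M⌋).prod (finite_Iic N)).preimage hinj.injOn).subset ?_
  rintro w ⟨hden, hw⟩
  have hnum : (w.num : ℝ) = w * w.den := by exact_mod_cast (Rat.mul_den_eq_num w).symm
  have habs : |(w.num : ℝ)| ≤ M := by
    rw [hnum, abs_mul, Nat.abs_cast]
    exact mul_le_mul (abs_le_max_abs_abs hw.1 hw.2) (Nat.cast_le.2 hden) (Nat.cast_nonneg _)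
      (le_max_of_le_left (abs_nonneg a))
  rw [abs_le] at habs
  exact ⟨⟨Int.ceil_le.2 habs.1, Int.le_floor.2 habs.2⟩, hden⟩

/-- For large `s` the rational `w` repels `r / s`; for small `s` the point `y` does. -/
theorem avoids_of_near {τ S N : ℕ} {w : ℚ} {y : ℝ} (hτ : 3 ≤ τ) (hN : 2048 ≤ N) (hw : w.den ≤ N)
    (hy : y ∈ farPoints τ S N) (hwy : |y - w| ≤ 16 / (N : ℝ) ^ 2) : Avoids τ S w := by
  intro s r hs hsw
  have hs0 : 0 < s := by omega
  have hs1 : (1 : ℝ) ≤ s := by exact_mod_cast hs0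
  have hN' : (2048 : ℝ) ≤ N := by exact_mod_cast hN
  have hpow : (s : ℝ) ^ (τ - 1) * s = (s : ℝ) ^ τ := pow_sub_one_mul (by omega) _
  rcases le_or_gt (2 * (N : ℝ)) ((s : ℝ) ^ (τ - 1)) with hlarge | hsmall
  · have hne : (w : ℝ) ≠ r / s := fun h ↦
      hsw.not_ge (Nat.le_of_dvd hs0 (den_dvd_of_cast_eq_div h))
    calc 2 / (s : ℝ) ^ τ ≤ 2 / (2 * N * s) := by rw [← hpow]; gcongr
      _ = 1 / (N * s) := by field_simp
      _ ≤ 1 / ((w.den : ℝ) * s) := by gcongr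
      _ ≤ |(w : ℝ) - r / s| := one_div_den_mul_le_abs_sub hne
  · have hsq : (s : ℝ) ^ 2 ≤ (s : ℝ) ^ (τ - 1) := pow_le_pow_right₀ hs1 (by omega)
    have hsN : 16 * (s : ℝ) ^ τ ≤ N ^ 2 := by
      refine le_of_sq_le_sq ?_ (by positivity)
      calc (16 * (s : ℝ) ^ τ) ^ 2 = 256 * (((s : ℝ) ^ (τ - 1)) ^ 2 * (s : ℝ) ^ 2) := by
            rw [← hpow]; ring
        _ ≤ 256 * ((2 * N : ℝ) ^ 2 * (2 * N)) := by gcongr; linarith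
        _ = 2048 * (N : ℝ) ^ 3 := by ring
        _ ≤ N * (N : ℝ) ^ 3 := by gcongr
        _ = ((N : ℝ) ^ 2) ^ 2 := by ring
    have hclose : 16 / (N : ℝ) ^ 2 ≤ 1 / (s : ℝ) ^ τ := by
      rw [div_le_div_iff₀ (by positivity) (by positivity)]
      linarith
    have hfar := hy.1 s r hs (by omega)
    have htriangle := abs_sub_le y w (r / s)
    have hthree : 3 / (s : ℝ) ^ τ = 2 / (s : ℝ) ^ τ + 1 / (s : ℝ) ^ τ := by ring
    linarith

theorem exists_rat_near_of_mem_farPoints {τ S N : ℕ} {y : ℝ} (hN : 0 < N)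
    (hy : y ∈ farPoints τ S N) :
    ∃ w : ℚ, w.den ≤ N ∧ N < 16 * w.den ∧ |y - w| ≤ 16 / (N : ℝ) ^ 2 := by
  obtain ⟨w, hwy, hwN⟩ := Real.exists_rat_abs_sub_le_and_den_le y hN
  have hdirichlet : |y - w| ≤ 1 / (w.den * N) := by
    refine hwy.trans ?_
    rw [mul_comm]
    gcongr
    linarith
  have hlarge : N < 16 * w.den := by
    by_contra! hle
    have hfar := hy.2 w.den w.num w.den_pos hle
    rw [← Rat.cast_def] at hfar
    exact hfar.not_ge hdirichlet
  refine ⟨w, hwN, hlarge, hdirichlet.trans ?_⟩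
  have hlarge' : (N : ℝ) ≤ 16 * w.den := by exact_mod_cast hlarge.le
  rw [div_le_div_iff₀ (by positivity) (by positivity)]
  nlinarith

/-- By Dirichlet's theorem, rationals with denominators in `(N / 16, N]` are `16 / N²`-dense in
`farPoints τ S N`. -/
theorem exists_finset_avoids {τ S N : ℕ} {a b : ℝ} (hτ : 3 ≤ τ) (hS : 48 ≤ S) (hN : 2048 ≤ N)
    (hab : a ≤ b) (hℓS : 336 ≤ (b - a) * (S : ℝ) ^ (τ - 1))
    (hℓN : 48 * (1 + Real.log N) / N ≤ b - a) :
    ∃ R : Finset ℚ, (∀ w ∈ R, w.den ≤ N ∧ N < 16 * w.den ∧ Avoids τ S w ∧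
        (w : ℝ) ∈ Icc (a - 16 / (N : ℝ) ^ 2) (b + 16 / (N : ℝ) ^ 2)) ∧
      (b - a) * (N : ℝ) ^ 2 ≤ 64 * R.card := by
  have hN0 : 0 < N := by omega
  set ρ : ℝ := 16 / (N : ℝ) ^ 2
  have hfin : {w : ℚ | w.den ≤ N ∧ N < 16 * w.den ∧ Avoids τ S w ∧
      (w : ℝ) ∈ Icc (a - ρ) (b + ρ)}.Finite :=
    (finite_setOf_den_le_and_mem_Icc N (a - ρ) (b + ρ)).subset fun w hw ↦ ⟨hw.1, hw.2.2.2⟩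
  refine ⟨hfin.toFinset, fun w hw ↦ hfin.mem_toFinset.1 hw, ?_⟩
  have hcover : Icc a b ∩ farPoints τ S N ⊆
      ⋃ w ∈ hfin.toFinset, Metric.closedBall (w : ℝ) ρ := by
    rintro y ⟨hyab, hy⟩
    obtain ⟨w, hwN, hNw, hwy⟩ := exists_rat_near_of_mem_farPoints hN0 hy
    refine mem_iUnion₂.2 ⟨w, hfin.mem_toFinset.2 ⟨hwN, hNw, avoids_of_near hτ hN hwN hy hwy, ?_⟩,
      by rwa [Metric.mem_closedBall, Real.dist_eq]⟩
    rw [abs_le] at hwy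
    constructor <;> linarith [hyab.1, hyab.2]
  have hvolume := (half_le_volume_Icc_inter_farPoints hτ hS hN0 hab hℓS hℓN).trans
    (volume_le_of_subset_biUnion_closedBall hcover)
  have hN' : (0 : ℝ) < N := Nat.cast_pos.2 hN0
  rw [ENNReal.ofReal_le_ofReal_iff (by positivity), div_le_iff₀ zero_lt_two] at hvolume
  calc (b - a) * (N : ℝ) ^ 2
      ≤ (hfin.toFinset.card : ℝ) * (2 * (16 / (N : ℝ) ^ 2)) * 2 * (N : ℝ) ^ 2 := by gcongr
    _ = 64 * (hfin.toFinset.card : ℝ) := by field_simp; ring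

/-! ### The lower bound -/

theorem eventually_one_add_log_div_le {ε : ℝ} (hε : 0 < ε) :
    ∀ᶠ N : ℕ in atTop, 48 * (1 + Real.log N) / N ≤ ε := by
  have hlittle : (fun x : ℝ ↦ 48 * (1 + Real.log x)) =o[atTop] fun x ↦ x :=
    ((Asymptotics.isLittleO_const_id_atTop 1).add Real.isLittleO_log_id_atTop).const_mul_left 48
  filter_upwards [(hlittle.comp_tendsto tendsto_natCast_atTop_atTop).bound hε,
    eventually_gt_atTop 0] with N hN hN0
  rw [div_le_iff₀ (Nat.cast_pos.2 hN0)]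
  simpa using (le_abs_self _).trans hN

theorem eventually_rpow_mul_pow_le {A c r : ℝ} {m n : ℕ} (hA : 0 ≤ A) (hc : 0 < c)
    (hr : n * r < m) : ∀ᶠ N : ℕ in atTop, (A * (N : ℝ) ^ n) ^ r ≤ c * (N : ℝ) ^ m := by
  have hlarge : ∀ᶠ N : ℕ in atTop, A ^ r / c ≤ (N : ℝ) ^ (m - n * r) :=
    ((tendsto_rpow_atTop (sub_pos.2 hr)).comp tendsto_natCast_atTop_atTop).eventually_ge_atTop _
  filter_upwards [hlarge, eventually_gt_atTop 0] with N hN hN0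
  have hN' : (0 : ℝ) < N := Nat.cast_pos.2 hN0
  rw [div_le_iff₀' hc] at hN
  calc (A * (N : ℝ) ^ n) ^ r = A ^ r * (N : ℝ) ^ (n * r) := by
        rw [Real.mul_rpow hA (by positivity), ← Real.rpow_natCast, ← Real.rpow_mul hN'.le]
    _ ≤ c * (N : ℝ) ^ (m - n * r) * (N : ℝ) ^ (n * r) := by gcongr
    _ = c * (N : ℝ) ^ m := by
        rw [mul_assoc, ← Real.rpow_add hN', sub_add_cancel, Real.rpow_natCast]

theorem pow_mul_self_mul_le_div_pow {τ q : ℕ} (hτ : 3 ≤ τ) (hq : 8 ≤ q) :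
    q ^ (τ * τ) * q ≤ (q ^ (τ * (τ - 1)) / 4) ^ (τ - 1) := by
  obtain ⟨n, rfl⟩ := Nat.exists_eq_add_of_le' (by omega : 1 ≤ τ)
  rw [Nat.add_sub_cancel]
  have hself : q ≤ q ^ ((n + 1) * n) := Nat.le_self_pow (Nat.mul_ne_zero (by omega) (by omega)) q
  refine Nat.le_of_mul_le_mul_left ?_ (by positivity : 0 < 8 ^ n)
  calc 8 ^ n * (q ^ ((n + 1) * (n + 1)) * q) ≤ q ^ n * (q ^ ((n + 1) * (n + 1)) * q) := by gcongr
    _ = q ^ ((n + 1) * (n + 1) + (n + 1)) := by ring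
    _ ≤ q ^ ((n + 1) * n * n) := Nat.pow_le_pow_right (by omega) (by nlinarith)
    _ = (q ^ ((n + 1) * n)) ^ n := pow_mul _ _ _
    _ ≤ (8 * (q ^ ((n + 1) * n) / 4)) ^ n := by gcongr; omega
    _ = 8 ^ n * (q ^ ((n + 1) * n) / 4) ^ n := mul_pow _ _ _

/-- The length of the window of `v` when `1 ≤ C`. -/
noncomputable def windowLength (τ : ℕ) (C : ℝ) (v : ℚ) : ℝ :=
  (C - 1) / (v.den : ℝ) ^ (τ * τ)

theorem windowPoint_add_windowLength (τ : ℕ) (C : ℝ) (v : ℚ) :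
    windowPoint τ C v + windowLength τ C v = windowPoint τ 1 v := by
  rw [windowPoint, windowPoint, windowLength, sub_div]
  ring

theorem one_div_sq_le_sub {w w' : ℚ} {N : ℕ} (hw : w.den ≤ N) (hw' : w'.den ≤ N) (h : w < w') :
    1 / (N : ℝ) ^ 2 ≤ w' - w := by
  have hlt : (w : ℝ) < w' := by exact_mod_cast h
  have hne : (w' : ℝ) ≠ w.num / w.den := by
    rw [← Rat.cast_def]
    exact hlt.ne'
  calc 1 / (N : ℝ) ^ 2 ≤ 1 / ((w'.den : ℝ) * w.den) := by rw [sq]; gcongr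
    _ ≤ |(w' : ℝ) - w.num / w.den| := one_div_den_mul_le_abs_sub hne
    _ = w' - w := by rw [← Rat.cast_def, abs_of_pos (sub_pos.2 hlt)]

theorem windowPoint_mem_Icc_of_lt_den {τ N : ℕ} {θ : ℝ} {w : ℚ} (hτ : 3 ≤ τ) (hN : 8192 ≤ N)
    (hw : N < 16 * w.den) (hθ : θ ∈ Icc 0 2) :
    windowPoint τ θ w ∈ Icc (w : ℝ) (w + 1 / (2 * (N : ℝ) ^ 2)) := by
  obtain ⟨hlo, hhi⟩ := windowPoint_sub_mem_Icc (by omega : 2 ≤ τ) (by omega : 2 ≤ w.den) hθ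
  have hN' : (8192 : ℝ) ≤ N := by exact_mod_cast hN
  have hden : (N : ℝ) / 16 ≤ w.den := by
    rw [div_le_iff₀' (by norm_num)]
    exact_mod_cast hw.le
  have hpow : 2 * (N : ℝ) ^ 2 ≤ (w.den : ℝ) ^ τ := by
    calc 2 * (N : ℝ) ^ 2 = 8192 * (N : ℝ) ^ 2 / 4096 := by ring
      _ ≤ N * (N : ℝ) ^ 2 / 4096 := by gcongr
      _ = ((N : ℝ) / 16) ^ 3 := by ring
      _ ≤ (w.den : ℝ) ^ 3 := by gcongr
      _ ≤ (w.den : ℝ) ^ τ := pow_le_pow_right₀ (by linarith) hτ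
  have hsmall : 1 / (w.den : ℝ) ^ τ ≤ 1 / (2 * (N : ℝ) ^ 2) := by gcongr
  have hnonneg : 0 ≤ 1 / (2 * (w.den : ℝ) ^ τ) := by positivity
  constructor <;> linarith

/-- A rational in the middle half of the window of `v` leaves room for its own window. -/
theorem window_subset_window_of_mem_Icc {τ N : ℕ} {C δ : ℝ} {v w : ℚ} (hτ : 3 ≤ τ)
    (hC : C ∈ Icc 0 2) (hN : 8192 ≤ N) (hw : N < 16 * w.den) (hδ : 17 / (N : ℝ) ^ 2 ≤ δ)
    (hwv : (w : ℝ) ∈ Icc (windowPoint τ C v + δ - 16 / (N : ℝ) ^ 2)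
      (windowPoint τ 1 v - δ + 16 / (N : ℝ) ^ 2)) :
    window τ C w ⊆ window τ C v := by
  have hleft := (windowPoint_mem_Icc_of_lt_den hτ hN hw hC).1
  have hright := (windowPoint_mem_Icc_of_lt_den hτ hN hw (θ := 1) ⟨by norm_num, by norm_num⟩).2
  have hhalf : 1 / (2 * (N : ℝ) ^ 2) ≤ 1 / (N : ℝ) ^ 2 := by
    gcongr
    exact le_mul_of_one_le_left (by positivity) one_le_two
  have hsplit : 17 / (N : ℝ) ^ 2 = 16 / (N : ℝ) ^ 2 + 1 / (N : ℝ) ^ 2 := by ring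
  have hnonneg : 0 ≤ 1 / (N : ℝ) ^ 2 := by positivity
  exact Icc_subset_Icc (by linarith [hwv.1]) (by linarith [hwv.2])

/-- `w` is an admissible successor of `v` in a sequence of rationals whose windows shrink to a point
of `criticalSet τ C`. -/
structure IsChild (τ : ℕ) (C : ℝ) (v w : ℚ) : Prop where
  den_lt : v.den < w.den
  avoids : Avoids τ (v.den ^ (τ * (τ - 1)) / 4) w
  window_subset : window τ C w ⊆ window τ C v

section Children

variable {τ : ℕ} {C : ℝ} {v : ℚ} (hτ : 3 ≤ τ) (hC1 : 1 < C) (hC2 : C ≤ 2)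
  (hv : 672 ≤ (C - 1) * v.den)

include hC2 hv in
theorem le_den_of_le_sub_one_mul : 672 ≤ v.den := by
  have hden : (672 : ℝ) ≤ v.den :=
    hv.trans (mul_le_of_le_one_left (Nat.cast_nonneg _) (by linarith))
  exact_mod_cast hden

include hC1 in
variable (τ v) in
theorem windowLength_pos : 0 < windowLength τ C v :=
  div_pos (sub_pos.2 hC1) (pow_pos (Nat.cast_pos.2 v.den_pos) _)

include hC2 in
variable (τ v) in
theorem windowLength_le_one : windowLength τ C v ≤ 1 :=
  div_le_one_of_le₀ (le_trans (by linarith) (one_le_pow₀ (by exact_mod_cast v.den_pos)))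
    (by positivity)

include hτ hC1 hC2 hv

theorem le_windowLength_mul_pow :
    672 ≤ windowLength τ C v * ((v.den ^ (τ * (τ - 1)) / 4 : ℕ) : ℝ) ^ (τ - 1) := by
  have hq : 672 ≤ v.den := le_den_of_le_sub_one_mul hC2 hv
  have hpow : (v.den : ℝ) ^ (τ * τ) * v.den ≤ ((v.den ^ (τ * (τ - 1)) / 4 : ℕ) : ℝ) ^ (τ - 1) := by
    exact_mod_cast pow_mul_self_mul_le_div_pow hτ (by omega : 8 ≤ v.den)
  calc 672 ≤ (C - 1) * v.den := hv
    _ = windowLength τ C v * ((v.den : ℝ) ^ (τ * τ) * v.den) := by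
        rw [windowLength]
        field_simp
    _ ≤ _ := mul_le_mul_of_nonneg_left hpow (windowLength_pos τ v hC1).le

theorem exists_finset_isChild {N : ℕ} (hN : 8192 ≤ N) (hvN : 16 * v.den ≤ N)
    (hlog : 48 * (1 + Real.log N) / N ≤ windowLength τ C v / 2) :
    ∃ R : Finset ℚ, (∀ w ∈ R, w.den ≤ N ∧ N < 16 * w.den ∧ IsChild τ C v w) ∧
      2 ≤ R.card ∧ windowLength τ C v * (N : ℝ) ^ 2 ≤ 128 * R.card := by
  have hq : 672 ≤ v.den := le_den_of_le_sub_one_mul hC2 hv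
  have hL : 0 < windowLength τ C v := windowLength_pos τ v hC1
  have hN' : (8192 : ℝ) ≤ N := by exact_mod_cast hN
  have hS : 48 ≤ v.den ^ (τ * (τ - 1)) / 4 := by
    have hself : v.den ≤ v.den ^ (τ * (τ - 1)) :=
      Nat.le_self_pow (mul_ne_zero (by omega) (by omega)) _
    omega
  have hLS := le_windowLength_mul_pow hτ hC1 hC2 hv
  have hright := windowPoint_add_windowLength τ C v
  set L := windowLength τ C v
  have hmiddle : windowPoint τ 1 v - L / 4 - (windowPoint τ C v + L / 4) = L / 2 := by linarith
  obtain ⟨R, hR, hcard⟩ := exists_finset_avoids hτ hS (by omega : 2048 ≤ N)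
    (a := windowPoint τ C v + L / 4) (b := windowPoint τ 1 v - L / 4) (by linarith)
    (by rw [hmiddle]; linarith) (by rwa [hmiddle])
  have hLN : 256 ≤ L * (N : ℝ) ^ 2 := by
    have hlog0 : 0 ≤ Real.log N := Real.log_nonneg (by linarith)
    rw [div_le_iff₀ (by linarith)] at hlog
    nlinarith
  rw [hmiddle] at hcard
  have hcard' : L * (N : ℝ) ^ 2 ≤ 128 * R.card := by linarith
  refine ⟨R, fun w hw ↦ ?_, ?_, hcard'⟩
  · obtain ⟨hwN, hNw, hav, hlo, hhi⟩ := hR w hw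
    refine ⟨hwN, hNw, by omega, hav, ?_⟩
    refine window_subset_window_of_mem_Icc hτ ⟨by linarith, hC2⟩ hN hNw ?_ ⟨hlo, hhi⟩
    rw [div_le_iff₀ (by positivity)]
    linarith
  · have htwo : (2 : ℝ) ≤ R.card := by linarith
    exact_mod_cast htwo

theorem exists_children {r : ℝ} (hr0 : 0 ≤ r) (hr : (τ * τ : ℕ) * r < 2) :
    ∃ (R : Finset ℚ) (ε : ℝ), 0 < ε ∧ 2 ≤ R.card ∧ windowLength τ C v / 256 ≤ R.card * ε ∧
      (∀ w ∈ R, IsChild τ C v w ∧ (256 / windowLength τ C w) ^ r ≤ R.card) ∧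
      ∀ w ∈ R, ∀ w' ∈ R, w < w' → windowPoint τ 1 w + ε ≤ windowPoint τ C w' := by
  have hL : 0 < windowLength τ C v := windowLength_pos τ v hC1
  obtain ⟨N, hlog, hweight, hN, hvN⟩ := ((eventually_one_add_log_div_le (half_pos hL)).and
    ((eventually_rpow_mul_pow_le (m := 2) (by positivity : 0 ≤ 256 / (C - 1))
      (by positivity : 0 < windowLength τ C v / 128) (by exact_mod_cast hr)).and
    ((eventually_ge_atTop 8192).and (eventually_ge_atTop (16 * v.den))))).exists
  obtain ⟨R, hR, htwo, hcard⟩ := exists_finset_isChild hτ hC1 hC2 hv hN hvN hlog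
  refine ⟨R, 1 / (2 * (N : ℝ) ^ 2), by positivity, htwo, ?_, fun w hw ↦ ?_,
    fun w hw w' hw' hlt ↦ ?_⟩
  · rw [mul_one_div, div_le_div_iff₀ (by norm_num) (by positivity)]
    linarith
  · obtain ⟨hwN, -, hchild⟩ := hR w hw
    refine ⟨hchild, ?_⟩
    have hlength : 256 / windowLength τ C w = 256 / (C - 1) * (w.den : ℝ) ^ (τ * τ) := by
      rw [windowLength, div_div_eq_mul_div, div_mul_eq_mul_div]
    rw [hlength]
    calc (256 / (C - 1) * (w.den : ℝ) ^ (τ * τ)) ^ r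
        ≤ (256 / (C - 1) * (N : ℝ) ^ (τ * τ)) ^ r := by gcongr
      _ ≤ windowLength τ C v / 128 * (N : ℝ) ^ 2 := hweight
      _ ≤ R.card := by linarith
  · obtain ⟨hwN, hNw, -⟩ := hR w hw
    obtain ⟨hwN', hNw', -⟩ := hR w' hw'
    have hsep := one_div_sq_le_sub hwN hwN' hlt
    have hright := (windowPoint_mem_Icc_of_lt_den hτ hN hNw (θ := 1)
      ⟨by norm_num, by norm_num⟩).2
    have hleft := (windowPoint_mem_Icc_of_lt_den hτ hN hNw' (θ := C) ⟨by linarith, hC2⟩).1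
    have hsplit : 1 / (N : ℝ) ^ 2 = 1 / (2 * (N : ℝ) ^ 2) + 1 / (2 * (N : ℝ) ^ 2) := by
      field_simp
      norm_num
    linarith

end Children

/-- The rationals whose denominator is large enough, in terms of `C`, to have children. -/
abbrev Node (C : ℝ) : Type := {v : ℚ // 672 ≤ (C - 1) * v.den}

theorem exists_intervalTree {τ : ℕ} {C : ℝ} {r : ℝ≥0} (hτ : 3 ≤ τ) (hC1 : 1 < C) (hC2 : C ≤ 2)
    (hr : (τ * τ : ℕ) * (r : ℝ) < 2) :
    ∃ T : IntervalTree (Node C),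
      (∀ v, Icc (T.lo v) (T.hi v) = window τ C v) ∧
      (∀ (v : Node C) i, IsChild τ C v (T.child v i)) ∧
      (∀ v : Node C, 1 ≤ (256 / windowLength τ C v) ^ (r : ℝ) * (T.arity v * T.gap v) ^ (r : ℝ)) ∧
      ∀ (v : Node C) i, (256 / windowLength τ C (T.child v i)) ^ (r : ℝ) ≤
        T.arity v * (256 / windowLength τ C v) ^ (r : ℝ) := by
  choose R ε hε htwo hsum hchild hsep using fun v : Node C ↦
    exists_children hτ hC1 hC2 v.2 r.coe_nonneg hr
  let e (v : Node C) : Fin (R v).card ↪o ℚ := (R v).orderEmbOfFin rfl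
  have he (v : Node C) (i : Fin (R v).card) : e v i ∈ R v := (R v).orderEmbOfFin_mem rfl i
  have hL (v : ℚ) : 0 < windowLength τ C v := windowLength_pos τ v hC1
  have hnode (v : Node C) (i : Fin (R v).card) : 672 ≤ (C - 1) * (e v i).den := by
    refine v.2.trans (mul_le_mul_of_nonneg_left ?_ (sub_nonneg.2 hC1.le))
    exact_mod_cast (hchild v _ (he v i)).1.den_lt.le
  refine ⟨{
    lo := fun v ↦ windowPoint τ C v
    hi := fun v ↦ windowPoint τ 1 v
    gap := ε
    arity := fun v ↦ (R v).card
    child := fun v i ↦ ⟨e v i, hnode v i⟩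
    lo_le_hi := fun v ↦ by
      rw [← windowPoint_add_windowLength τ C v]
      exact le_add_of_nonneg_right (hL v).le
    gap_pos := hε
    two_le_arity := htwo
    child_subset := fun v i ↦ (hchild v _ (he v i)).1.window_subset
    separated := fun v i j hij ↦ hsep v _ (he v i) _ (he v j) ((e v).strictMono hij) },
    fun v ↦ rfl, fun v i ↦ (hchild v _ (he v i)).1, fun v ↦ ?_, fun v i ↦ ?_⟩
  · have hLv := hL v
    rw [← Real.mul_rpow (by positivity) (mul_nonneg (Nat.cast_nonneg _) (hε v).le)]
    refine Real.one_le_rpow ?_ r.coe_nonneg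
    calc 1 = 256 / windowLength τ C v * (windowLength τ C v / 256) := by field_simp
      _ ≤ 256 / windowLength τ C v * ((R v).card * ε v) := by gcongr; exact hsum v
  · refine (hchild v _ (he v i)).2.trans (le_mul_of_one_le_right (Nat.cast_nonneg _)
      (Real.one_le_rpow ?_ r.coe_nonneg))
    rw [one_le_div (hL v)]
    linarith [windowLength_le_one τ v hC2]

theorem le_dimH_criticalSet {τ : ℕ} {C : ℝ} {r : ℝ≥0} (hτ : 3 ≤ τ) (hC1 : 1 < C) (hC2 : C ≤ 2)
    (hr : (τ * τ : ℕ) * (r : ℝ) < 2) : r ≤ dimH (criticalSet τ C) := by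
  obtain ⟨T, hwindow, hchild, hB, hB_child⟩ := exists_intervalTree hτ hC1 hC2 hr
  have hr1 : r ≤ 1 := by
    have hτ' : (9 : ℝ) ≤ (τ * τ : ℕ) := by exact_mod_cast Nat.mul_le_mul hτ hτ
    have hr1 : (r : ℝ) ≤ 1 := by nlinarith [r.coe_nonneg]
    exact_mod_cast hr1
  obtain ⟨n, hn⟩ := exists_nat_ge (672 / (C - 1))
  rw [div_le_iff₀' (sub_pos.2 hC1)] at hn
  have hn0 : 0 < n := Nat.pos_of_ne_zero fun h ↦ by norm_num [h] at hn
  have hroot : 672 ≤ (C - 1) * ((n : ℚ)⁻¹).den := by rwa [Rat.inv_natCast_den_of_pos hn0]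
  refine (T.le_dimH_limitSet hr1 hB hB_child ⟨(n : ℚ)⁻¹, hroot⟩).trans (dimH_mono ?_)
  rintro x ⟨v, -, hstep, hx⟩
  have hstep' (k : ℕ) : IsChild τ C (v k) (v (k + 1)) := by
    obtain ⟨i, hi⟩ := hstep k
    exact hi ▸ hchild (v k) i
  exact mem_criticalSet_of_mem_window hτ hC2
    (fun k ↦ le_trans (by norm_num) (le_den_of_le_sub_one_mul hC2 (v k).2))
    (strictMono_nat_of_lt_succ fun k ↦ (hstep' k).den_lt) (fun k ↦ (hstep' k).avoids)
    fun k ↦ hwindow (v k) ▸ hx k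

theorem ofReal_two_div_sq_le_dimH_criticalSet {τ : ℕ} {C : ℝ} (hτ : 3 ≤ τ) (hC : 1 < C) :
    ENNReal.ofReal (2 / (τ : ℝ) ^ 2) ≤ dimH (criticalSet τ C) := by
  refine ENNReal.le_of_forall_nnreal_lt fun r hr ↦ ?_
  refine (le_dimH_criticalSet hτ (lt_min hC one_lt_two) (min_le_right C 2) ?_).trans
    (dimH_mono (criticalSet_mono τ (min_le_left C 2)))
  have hτ0 : (0 : ℝ) < τ := Nat.cast_pos.2 (by omega)
  rw [ENNReal.lt_ofReal_iff_toReal_lt ENNReal.coe_ne_top, ENNReal.coe_toReal,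
    lt_div_iff₀' (by positivity), sq] at hr
  exact_mod_cast hr

/-! ### The upper bound -/

theorem hausdorffMeasure_limsup_cofinite_eq_zero {X ι : Type*} [EMetricSpace X]
    [MeasurableSpace X] [BorelSpace X] [Countable ι] {d : ℝ} (hd : 0 < d) {U : ι → Set X}
    (hU : ∑' i, Metric.ediam (U i) ^ d ≠ ∞) :
    Measure.hausdorffMeasure d (limsup U cofinite) = 0 := by
  have htail := ENNReal.tendsto_tsum_compl_atTop_zero hU
  have hroot : Tendsto (fun F : Finset ι ↦ (∑' i : {i // i ∉ F}, Metric.ediam (U i) ^ d) ^ d⁻¹)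
      atTop (nhds 0) := by
    simpa only [ENNReal.zero_rpow_of_pos (inv_pos.2 hd)] using htail.ennrpow_const d⁻¹
  have hle := Measure.hausdorffMeasure_le_liminf_tsum (ι := fun F : Finset ι ↦ {i // i ∉ F}) d
    (limsup U cofinite) _ hroot (fun _ i ↦ U i)
    (Eventually.of_forall fun F i ↦ (ENNReal.le_rpow_inv_iff hd).2
      (ENNReal.le_tsum (f := fun i : {i // i ∉ F} ↦ Metric.ediam (U i) ^ d) i))
    (Eventually.of_forall fun F x hx ↦ by
      rw [cofinite.limsup_set_eq] at hx
      obtain ⟨i, hxi, hiF⟩ := hx.exists_notMem_finset F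
      exact mem_iUnion.2 ⟨⟨i, hiF⟩, hxi⟩)
  rwa [htail.liminf_eq, nonpos_iff_eq_zero] at hle

/-- The inhomogeneous version of `WSet`: the points that are within `ρ q` of the shifted fraction
`p / q + η q` for infinitely many pairs `(p, q)`. -/
def shiftedWSet (η ρ : ℕ → ℝ) : Set ℝ :=
  {x | {pq : ℤ × ℕ | 0 < pq.2 ∧ |x - (pq.1 / pq.2 + η pq.2)| ≤ ρ pq.2}.Infinite}

/-- The ball of radius `ρ q` around `p / q + η q`, indexed by `q` and the integers `p` with
`|p| ≤ K q`. -/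
def shiftedBall (η ρ : ℕ → ℝ) (K : ℕ) (i : Σ q : ℕ, Finset.Icc (-(K * q : ℤ)) (K * q)) : Set ℝ :=
  Metric.closedBall ((i.2 : ℤ) / (i.1 : ℝ) + η i.1) (ρ i.1)

section ShiftedBall

variable {η ρ : ℕ → ℝ}

theorem shiftedWSet_subset_iUnion_limsup {c : ℝ} (hη : ∀ q, |η q| ≤ 1)
    (hρ : ∀ q, 0 < q → ρ q ≤ c) :
    shiftedWSet η ρ ⊆ ⋃ K : ℕ, limsup (shiftedBall η ρ K) cofinite := by
  intro x hx
  obtain ⟨K, hK⟩ := exists_nat_ge (|x| + 1 + c)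
  refine mem_iUnion.2 ⟨K, ?_⟩
  rw [cofinite.limsup_set_eq]
  refine Infinite.of_image (fun i ↦ ((i.2 : ℤ), i.1)) (hx.mono ?_)
  rintro ⟨p, q⟩ ⟨hq, hxpq⟩
  have hq' : (0 : ℝ) < q := Nat.cast_pos.2 hq
  have habs : |(p : ℝ) / q| ≤ K := by
    have hη' := abs_le.1 (hη q)
    have hxpq' := abs_le.1 (hxpq.trans (hρ q hq))
    have hx' := abs_le.1 (le_refl |x|)
    rw [abs_le]
    constructor <;> linarith
  rw [abs_div, abs_of_pos hq', div_le_iff₀ hq', abs_le] at habs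
  have hp : p ∈ Finset.Icc (-(K * q : ℤ)) (K * q) := Finset.mem_Icc.2 (by exact_mod_cast habs)
  refine ⟨⟨q, p, hp⟩, ?_, rfl⟩
  simpa only [shiftedBall, mem_ofPred_eq, Metric.mem_closedBall, Real.dist_eq]

theorem tsum_ediam_shiftedBall_rpow_le (hρ : ∀ q, 0 ≤ ρ q) {d : ℝ} (hd : 0 ≤ d) (K : ℕ) :
    ∑' i, Metric.ediam (shiftedBall η ρ K i) ^ d ≤
      ∑' q : ℕ, ENNReal.ofReal ((2 * K * q + 1) * (2 * ρ q) ^ d) := by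
  rw [ENNReal.tsum_sigma']
  refine ENNReal.tsum_le_tsum fun q ↦ le_of_eq ?_
  have hball (p : Finset.Icc (-(K * q : ℤ)) (K * q)) :
      Metric.ediam (shiftedBall η ρ K ⟨q, p⟩) ^ d = ENNReal.ofReal ((2 * ρ q) ^ d) := by
    rw [shiftedBall, Real.closedBall_eq_Icc, Real.ediam_Icc, add_sub_sub_cancel, ← two_mul,
      ENNReal.ofReal_rpow_of_nonneg (mul_nonneg zero_le_two (hρ q)) hd]
  have hcard : (Finset.Icc (-(K * q : ℤ)) (K * q)).card = 2 * K * q + 1 := by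
    have hKq : (0 : ℤ) ≤ K * q := by positivity
    rw [Int.card_Icc, mul_assoc]
    zify
    omega
  rw [tsum_congr hball, tsum_fintype, Finset.sum_const, Finset.card_univ, Fintype.card_coe, hcard,
    nsmul_eq_mul, ← ENNReal.ofReal_natCast, ← ENNReal.ofReal_mul (Nat.cast_nonneg _)]
  push_cast
  rfl

end ShiftedBall

theorem tsum_ediam_shiftedBall_div_pow_rpow_ne_top {η : ℕ → ℝ} {C d : ℝ} {n : ℕ} (hC : 0 ≤ C)
    (hn : n ≠ 0) (hd : 2 < n * d) (K : ℕ) :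
    ∑' i, Metric.ediam (shiftedBall η (fun q ↦ C / (q : ℝ) ^ n) K i) ^ d ≠ ∞ := by
  have hd0 : 0 < d := pos_of_mul_pos_right (two_pos.trans hd) (Nat.cast_nonneg n)
  have hsummable : Summable fun q : ℕ ↦ (2 * K + 1) * (2 * C) ^ d * (q : ℝ) ^ (1 - n * d) :=
    (Real.summable_nat_rpow.2 (by linarith)).mul_left _
  refine ne_top_of_le_ne_top hsummable.tsum_ofReal_ne_top
    ((tsum_ediam_shiftedBall_rpow_le (fun q ↦ by positivity) hd0.le K).trans
      (ENNReal.tsum_le_tsum fun q ↦ ENNReal.ofReal_le_ofReal ?_))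
  rcases q.eq_zero_or_pos with rfl | hq
  · rw [Nat.cast_zero, zero_pow hn, div_zero, mul_zero, mul_zero, Real.zero_rpow hd0.ne', mul_zero]
    positivity
  have hq1 : (1 : ℝ) ≤ q := by exact_mod_cast hq
  have hq0 : (0 : ℝ) < q := zero_lt_one.trans_le hq1
  calc (2 * K * q + 1) * (2 * (C / (q : ℝ) ^ n)) ^ d
      ≤ (2 * K * q + q) * (2 * (C / (q : ℝ) ^ n)) ^ d := by gcongr
    _ = (2 * K + 1) * q * ((2 * C) ^ d / (q : ℝ) ^ (n * d)) := by
        rw [← mul_div_assoc, Real.div_rpow (by positivity) (by positivity), ← Real.rpow_natCast,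
          ← Real.rpow_mul hq0.le]
        ring
    _ = (2 * K + 1) * (2 * C) ^ d * (q : ℝ) ^ (1 - n * d) := by
        rw [Real.rpow_sub hq0, Real.rpow_one]
        ring

theorem dimH_shiftedWSet_div_pow_le {η : ℕ → ℝ} {C : ℝ} {n : ℕ} (hη : ∀ q, |η q| ≤ 1)
    (hC : 0 ≤ C) (hn : n ≠ 0) :
    dimH (shiftedWSet η fun q ↦ C / (q : ℝ) ^ n) ≤ ENNReal.ofReal (2 / n) := by
  have hρ (q : ℕ) (hq : 0 < q) : C / (q : ℝ) ^ n ≤ C :=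
    div_le_self hC (one_le_pow₀ (by exact_mod_cast hq))
  refine (dimH_mono (shiftedWSet_subset_iUnion_limsup hη hρ)).trans ?_
  rw [dimH_iUnion]
  refine iSup_le fun K ↦ dimH_le fun d htop ↦ ?_
  by_contra! hd
  rw [← ENNReal.ofReal_coe_nnreal, ENNReal.ofReal_lt_ofReal_iff_of_nonneg (by positivity),
    div_lt_iff₀' (by positivity)] at hd
  have hzero := hausdorffMeasure_limsup_cofinite_eq_zero
    (pos_of_mul_pos_right (two_pos.trans hd) (Nat.cast_nonneg n))
    (tsum_ediam_shiftedBall_div_pow_rpow_ne_top (η := η) hC hn hd K)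
  exact ENNReal.zero_ne_top (hzero ▸ htop)

/-- Enlarging the constant `C` to `D` makes the lower bound on `|x - p / q|` hold for all `q`; the
distance of `x` to `p / q + q ^ (-τ)` or `p / q - q ^ (-τ)` is then at most `D q ^ (-τ²)`. -/
theorem criticalSet_subset_iUnion_shiftedWSet (τ : ℕ) (C : ℝ) :
    criticalSet τ C ⊆ ⋃ D : ℕ,
      shiftedWSet (fun q ↦ 1 / (q : ℝ) ^ τ) (fun q ↦ D / (q : ℝ) ^ (τ * τ)) ∪
      shiftedWSet (fun q ↦ -(1 / (q : ℝ) ^ τ)) fun q ↦ D / (q : ℝ) ^ (τ * τ) := by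
  intro x hx
  obtain ⟨hinf, Q, hQ⟩ := mem_criticalSet_iff.1 hx
  obtain ⟨D, hD⟩ := exists_nat_ge (max C ((Q : ℝ) ^ (τ * τ)))
  obtain ⟨hCD, hQD⟩ := max_le_iff.1 hD
  have hlower (q : ℕ) (hq : 0 < q) (p : ℤ) :
      1 / (q : ℝ) ^ τ - D / (q : ℝ) ^ (τ * τ) ≤ |x - p / q| := by
    have hq1 : (1 : ℝ) ≤ q := by exact_mod_cast hq
    rcases le_total Q q with hQq | hqQ
    · exact le_trans (by gcongr) (hQ q hQq p)
    · refine le_trans (sub_nonpos.2 ?_) (abs_nonneg _)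
      calc 1 / (q : ℝ) ^ τ ≤ 1 := div_le_one_of_le₀ (one_le_pow₀ hq1) (by positivity)
        _ ≤ D / (q : ℝ) ^ (τ * τ) := by
          rw [one_le_div (by positivity)]
          exact le_trans (by gcongr) hQD
  refine mem_iUnion.2 ⟨D, infinite_union.1 (hinf.mono ?_)⟩
  rintro ⟨p, q⟩ ⟨hq, hupper⟩
  have hD0 : 0 ≤ D / (q : ℝ) ^ (τ * τ) := by positivity
  have hlow := hlower q hq p
  rcases le_total 0 (x - p / q) with hpos | hneg
  · rw [abs_of_nonneg hpos] at hupper hlow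
    exact .inl ⟨hq, abs_le.2 ⟨by linarith, by linarith⟩⟩
  · rw [abs_of_nonpos hneg] at hupper hlow
    exact .inr ⟨hq, abs_le.2 ⟨by linarith, by linarith⟩⟩

theorem dimH_criticalSet_le {τ : ℕ} (hτ : τ ≠ 0) (C : ℝ) :
    dimH (criticalSet τ C) ≤ ENNReal.ofReal (2 / (τ : ℝ) ^ 2) := by
  have hη (q : ℕ) : |1 / (q : ℝ) ^ τ| ≤ 1 := by
    rw [abs_of_nonneg (by positivity)]
    rcases q.eq_zero_or_pos with rfl | hq
    · rw [Nat.cast_zero, zero_pow hτ, div_zero]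
      exact zero_le_one
    · exact div_le_one_of_le₀ (one_le_pow₀ (by exact_mod_cast hq)) (by positivity)
  refine (dimH_mono (criticalSet_subset_iUnion_shiftedWSet τ C)).trans ?_
  rw [dimH_iUnion, show (τ : ℝ) ^ 2 = (τ * τ : ℕ) by push_cast; ring]
  refine iSup_le fun D ↦ (dimH_union _ _).trans_le (max_le ?_ ?_)
  · exact dimH_shiftedWSet_div_pow_le hη D.cast_nonneg (mul_ne_zero hτ hτ)
  · exact dimH_shiftedWSet_div_pow_le (fun q ↦ (abs_neg _).trans_le (hη q)) D.cast_nonneg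
      (mul_ne_zero hτ hτ)

theorem dimH_ESet_rpow_critical_general (τ₁ : ℕ) (hτ₁ : 3 ≤ τ₁) (C : ℝ) (hC : 1 < C) :
    dimH (ESet (fun q : ℝ => q ^ (-(τ₁ : ℝ)))
        (fun q : ℝ => C * q ^ (-((τ₁ : ℝ) * ((τ₁ : ℝ) - 1))))) =
      ENNReal.ofReal (2 / (τ₁ : ℝ) ^ 2) :=
  le_antisymm (dimH_criticalSet_le (by omega) C) (ofReal_two_div_sq_le_dimH_criticalSet hτ₁ hC)

/-- **Theorem.** For a natural number `τ₁ ≥ 3`, `Ψ(q) = q^(−τ₁)` and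
`ω(q) = C·q^(−τ₁(τ₁−1))` with `C > (45/16)·8^τ₁`, one has `dim_H(E(Ψ,ω)) = 2/τ₁²`. -/
theorem dimH_ESet_rpow_critical (τ₁ : ℕ) (hτ₁ : 3 ≤ τ₁) (C : ℝ)
    (hC : (45 / 16 : ℝ) * 8 ^ τ₁ < C) :
    dimH (ESet (fun q : ℝ => q ^ (-(τ₁ : ℝ)))
        (fun q : ℝ => C * q ^ (-((τ₁ : ℝ) * ((τ₁ : ℝ) - 1))))) =
      ENNReal.ofReal (2 / (τ₁ : ℝ) ^ 2) :=
  dimH_ESet_rpow_critical_general τ₁ hτ₁ C <| by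
    linarith [one_le_pow₀ (by norm_num : (1 : ℝ) ≤ 8) (n := τ₁)]
end

section
/- Let τ₁ be a natural number with τ₁ ≥ 3 and let Ψ : (0,∞) → (0,∞) be given by Ψ(q) = q^{−τ₁}. If ω : (0,∞) → (0,∞) is given by ω(q) = c·q^{−τ₁(τ₁−1)} for some constant c ∈ (0,1), then E(Ψ,ω) = ∅. -/
open Filter Set

/-!
Suppose `Ψ q = 1 / N q` with `q ∣ N q`, and let `p / q` satisfy
`(1 - ω q) Ψ q ≤ |x - p / q| ≤ Ψ q`. The endpoint of `[p / q - Ψ q, p / q + Ψ q]` on the side of `x`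
is a fraction with denominator `N q`, and it lies within `ω q * Ψ q` of `x`. If `x ∈ E(Ψ, ω)`, the
same distance is at least `(1 - ω (N q)) Ψ (N q)`. For `N q = q ^ τ` and
`ω q = c q ^ (-τ (τ - 1))` one has `ω q * Ψ q = c Ψ (N q)`, so `1 - ω (N q) ≤ c` for arbitrarily
large `q`, which is impossible because `ω → 0` and `c < 1`.
-/

lemma finite_setOf_abs_sub_intCast_div_le (x r : ℝ) {d : ℝ} (hd : 0 < d) :
    {p : ℤ | |x - p / d| ≤ r}.Finite := by
  refine (finite_Icc ⌈(x - r) * d⌉ ⌊(x + r) * d⌋).subset fun p (hp : |x - p / d| ≤ r) => ?_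
  obtain ⟨hlower, hupper⟩ := abs_le.mp hp
  exact ⟨Int.ceil_le.mpr ((le_div_iff₀ hd).mp (by linarith)),
    Int.le_floor.mpr ((div_le_iff₀ hd).mp (by linarith))⟩

lemma frequently_exists_abs_sub_div_le_of_mem_WSet {Ψ : ℝ → ℝ} {x : ℝ} (hx : x ∈ WSet Ψ) :
    ∃ᶠ q : ℕ in atTop, ∃ p : ℤ, |x - p / q| ≤ Ψ q := by
  rw [Nat.frequently_atTop_iff_infinite]
  refine fun hfin => hx (Finite.of_finite_fibers Prod.snd (hfin.subset ?_) ?_)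
  · rintro _ ⟨⟨p, q⟩, ⟨-, hpq⟩, rfl⟩
    exact ⟨p, hpq⟩
  · rintro _ ⟨⟨_, q⟩, ⟨hq, -⟩, rfl⟩
    refine ((finite_setOf_abs_sub_intCast_div_le x (Ψ q) (Nat.cast_pos.mpr hq)).image
      (·, q)).subset ?_
    rintro ⟨p, _⟩ ⟨⟨-, hpq⟩, rfl⟩
    exact ⟨p, hpq, rfl⟩

lemma exists_abs_sub_div_eq_inv_sub_of_dvd {x : ℝ} {p : ℤ} {q n : ℕ} (hn : n ≠ 0) (hqn : q ∣ n)
    (hx : |x - p / q| ≤ (n : ℝ)⁻¹) :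
    ∃ p' : ℤ, |x - p' / n| = (n : ℝ)⁻¹ - |x - p / q| := by
  obtain ⟨m, rfl⟩ := hqn
  obtain ⟨-, hm⟩ := mul_ne_zero_iff.mp hn
  have hpq : ((p * m : ℤ) : ℝ) / (q * m : ℕ) = p / q := by
    push_cast
    exact mul_div_mul_right _ _ (Nat.cast_ne_zero.mpr hm)
  rcases le_total 0 (x - p / q) with hright | hleft
  · rw [abs_of_nonneg hright] at hx ⊢
    refine ⟨p * m + 1, ?_⟩
    rw [Int.cast_add, Int.cast_one, add_div, hpq, one_div, abs_of_nonpos (by linarith)]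
    ring
  · rw [abs_of_nonpos hleft] at hx ⊢
    refine ⟨p * m - 1, ?_⟩
    rw [Int.cast_sub, Int.cast_one, sub_div, hpq, one_div, abs_of_nonneg (by linarith)]
    ring

theorem ESet_eq_empty_of_dvd {Ψ ω : ℝ → ℝ} {N : ℕ → ℕ} (hN : Tendsto N atTop atTop)
    (hdvd : ∀ q, q ∣ N q) (hΨ : ∀ q : ℕ, Ψ q = (N q : ℝ)⁻¹)
    (hω : ∀ᶠ q : ℕ in atTop, ω q * Ψ q < (1 - ω (N q)) * Ψ (N q)) :
    ESet Ψ ω = ∅ := by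
  refine eq_empty_of_forall_notMem fun x ⟨hxW, hxE⟩ => ?_
  have hfar : ∀ᶠ q : ℕ in atTop, ∀ p : ℤ, (1 - ω q) * Ψ q ≤ |x - p / q| :=
    eventually_atTop.mpr hxE
  refine frequently_exists_abs_sub_div_le_of_mem_WSet hxW ?_
  filter_upwards [hfar, hN.eventually hfar, hN.eventually_ne_atTop 0, hω]
    with q hfar_q hfar_Nq hNq hω_q ⟨p, hp⟩
  obtain ⟨p', hp'⟩ := exists_abs_sub_div_eq_inv_sub_of_dvd hNq (hdvd q) (hΨ q ▸ hp)
  refine hω_q.not_ge ?_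
  calc (1 - ω (N q)) * Ψ (N q) ≤ |x - p' / N q| := hfar_Nq p'
    _ = Ψ q - |x - p / q| := by rw [hp', hΨ]
    _ ≤ ω q * Ψ q := by linarith [hfar_q p]

lemma rpow_neg_mul_sub_one_mul_rpow_neg {q : ℝ} (hq : 0 < q) (τ : ℝ) :
    q ^ (-(τ * (τ - 1))) * q ^ (-τ) = (q ^ τ) ^ (-τ) := by
  rw [← Real.rpow_add hq, ← Real.rpow_mul hq.le]
  ring_nf

theorem ESet_rpow_empty_general (τ : ℕ) (hτ : 2 ≤ τ) (c : ℝ) (hc : c < 1) :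
    ESet (fun q : ℝ => q ^ (-(τ : ℝ)))
        (fun q : ℝ => c * q ^ (-((τ : ℝ) * ((τ : ℝ) - 1)))) = ∅ := by
  have hτ₀ : τ ≠ 0 := by lia
  have hN : Tendsto (fun q : ℕ => q ^ τ) atTop atTop := tendsto_pow_atTop hτ₀
  have hexp : (0 : ℝ) < τ * (τ - 1) := by
    have : (2 : ℝ) ≤ τ := mod_cast hτ
    nlinarith
  have hω : Tendsto (fun q : ℝ => c * q ^ (-((τ : ℝ) * (τ - 1)))) atTop (nhds 0) := by
    simpa only [mul_zero] using (tendsto_rpow_neg_atTop hexp).const_mul c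
  refine ESet_eq_empty_of_dvd hN (fun q => dvd_pow_self q hτ₀) (fun q => ?_) ?_
  · rw [Real.rpow_neg q.cast_nonneg, Real.rpow_natCast, Nat.cast_pow]
  filter_upwards [(hω.comp (tendsto_natCast_atTop_atTop.comp hN)).eventually_lt_const
    (sub_pos.mpr hc), eventually_gt_atTop 0] with q hsmall hq
  have hq' : (0 : ℝ) < q := Nat.cast_pos.mpr hq
  rw [mul_assoc, rpow_neg_mul_sub_one_mul_rpow_neg hq', Real.rpow_natCast, ← Nat.cast_pow]
  exact mul_lt_mul_of_pos_right (lt_sub_comm.mp hsmall) (by positivity)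

/-- **Theorem.** For a natural number `τ₁ ≥ 3`, `Ψ(q) = q^(−τ₁)` and
`ω(q) = c·q^(−τ₁(τ₁−1))` with `c ∈ (0,1)`, one has `E(Ψ,ω) = ∅`. -/
theorem ESet_rpow_empty (τ₁ : ℕ) (hτ₁ : 3 ≤ τ₁) (c : ℝ) (hc : c ∈ Set.Ioo (0 : ℝ) 1) :
    ESet (fun q : ℝ => q ^ (-(τ₁ : ℝ)))
        (fun q : ℝ => c * q ^ (-((τ₁ : ℝ) * ((τ₁ : ℝ) - 1)))) = ∅ := by
  exact ESet_rpow_empty_general τ₁ (by lia) c hc.2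
end
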